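/- For every open bounded convex set Ω ⊂ ℝ^N and every open ball B ⊂ ℝ^N one has the strict inequality μ_p(Ω) < λ_p(B) · (diam(B)/diam(Ω))^p. -/

import Mathlib

open MeasureTheory Metric Set Real

noncomputable section

/-- The Rayleigh quotient `(∫_Ω |∇v|^p) / (∫_Ω |v|^q)^(p/q)`, where the gradient is
understood as the (a.e. defined) Fréchet derivative. -/
def rayleighQuot {N : ℕ} (p q : ℝ) (Ω : Set (EuclideanSpace ℝ (Fin N)))
    (v : EuclideanSpace ℝ (Fin N) → ℝ) : ℝ :=
  (∫ x in Ω, ‖fderiv ℝ v x‖ ^ p) / (∫ x in Ω, |v x| ^ q) ^ (p / q)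

/-- The first (generalized) Dirichlet eigenvalue `λ_{p,q}(Ω)`: infimum of the Rayleigh
quotient over nontrivial smooth functions compactly supported in `Ω`. -/
def lambdaPQ {N : ℕ} (p q : ℝ) (Ω : Set (EuclideanSpace ℝ (Fin N))) : ℝ :=
  sInf { R : ℝ | ∃ v : EuclideanSpace ℝ (Fin N) → ℝ,
    ContDiff ℝ (⊤ : ℕ∞) v ∧ HasCompactSupport v ∧ tsupport v ⊆ Ω ∧
    (∃ x ∈ Ω, v x ≠ 0) ∧ R = rayleighQuot p q Ω v }

/-- The first nontrivial (generalized) Neumann eigenvalue `μ_{p,q}(Ω)`: infimum of the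
Rayleigh quotient over nontrivial Lipschitz functions on the closure of `Ω` satisfying
the constraint `∫_Ω |v|^(q-2) v = 0`. -/
def muPQ {N : ℕ} (p q : ℝ) (Ω : Set (EuclideanSpace ℝ (Fin N))) : ℝ :=
  sInf { R : ℝ | ∃ v : EuclideanSpace ℝ (Fin N) → ℝ, ∃ K : NNReal,
    LipschitzOnWith K v (closure Ω) ∧ (∃ x ∈ Ω, v x ≠ 0) ∧
    (∫ x in Ω, |v x| ^ (q - 2) * v x) = 0 ∧ R = rayleighQuot p q Ω v }

/-- `q` is below the critical Sobolev exponent `p* = Np/(N-p)` (with `p* = ∞` if `p ≥ N`). -/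
def ltCritical (N : ℕ) (p q : ℝ) : Prop := p < N → q < N * p / (N - p)

end

/-!
Restrict a nearly optimal test function of `lambdaPQ` on the ball to a ray from the centre on which
its Rayleigh quotient is no larger than in the ball. Integrating the absolute value of its
derivative inwards makes it decreasing, and flattening it near `0` makes the energy inequality hold
on every initial interval of the ray, at no cost: this gives a radial profile `F`, which we rescale
to vanish beyond `diam Ω / 2`.

Let `x₀` be an endpoint of a diameter of `Ω`, let `e` point from `x₀` to the other endpoint, and let
`h y = (‖y‖ + ⟪e, y⟫) / 2`. In polar coordinates around `x₀`, the convex set `Ω` is a union of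
initial segments of rays, on each of which `h` is linear; hence `x ↦ F (h (x - x₀))` satisfies on
`Ω` the same energy inequality as `F`. The inequality is even strict, by a factor which does not
depend on `F`, since `‖∇h‖ < 1` away from the axis. The bumps built in this way at the two ends of
the diameter have disjoint supports because `⟪e, y⟫ ≤ h y`. A linear combination of them with
coefficients of opposite signs meets the constraint in `muPQ`.
-/

open scoped ENNReal NNReal Topology InnerProductSpace

/-- The radial factor `t ^ n dt` on `(0, ∞)` of Lebesgue measure on `ℝ ^ (n + 1)` in polar
coordinates, encoded as a measure on `ℝ` so that rays need no coercion from a subtype. -/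
noncomputable def radialMeasure (n : ℕ) : Measure ℝ :=
  (volume.restrict (Ioi 0)).withDensity fun t ↦ ENNReal.ofReal (t ^ n)

namespace radialMeasure

variable {n : ℕ}

instance : NullSingletonClass (radialMeasure n) :=
  ⟨fun t ↦ withDensity_absolutelyContinuous _ _ (measure_singleton t)⟩

instance : IsLocallyFiniteMeasure (radialMeasure n) :=
  IsLocallyFiniteMeasure.withDensity_ofReal (continuous_pow n)

theorem absolutelyContinuous : radialMeasure n ≪ volume :=
  (withDensity_absolutelyContinuous _ _).trans Measure.restrict_le_self.absolutelyContinuous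

theorem restrict_Ioi : (radialMeasure n).restrict (Ioi 0) = radialMeasure n := by
  rw [radialMeasure, restrict_withDensity measurableSet_Ioi,
    Measure.restrict_restrict measurableSet_Ioi, inter_self]

theorem lintegral_eq (g : ℝ → ℝ≥0∞) :
    ∫⁻ t, g t ∂radialMeasure n = ∫⁻ t in Ioi 0, ENNReal.ofReal (t ^ n) * g t :=
  lintegral_withDensity_eq_lintegral_mul_non_measurable _ (by fun_prop)
    (ae_of_all _ fun _ ↦ ENNReal.ofReal_lt_top) g

theorem setLIntegral_Ioo_eq (g : ℝ → ℝ≥0∞) (ρ : ℝ) :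
    ∫⁻ t in Ioo 0 ρ, g t ∂radialMeasure n =
      ∫⁻ t in Ioo 0 ρ, ENNReal.ofReal (t ^ n) * g t := by
  rw [radialMeasure, restrict_withDensity measurableSet_Ioo,
    Measure.restrict_restrict measurableSet_Ioo, inter_eq_left.2 Ioo_subset_Ioi_self]
  exact lintegral_withDensity_eq_lintegral_mul_non_measurable _ (by fun_prop)
    (ae_of_all _ fun _ ↦ ENNReal.ofReal_lt_top) g

theorem setLIntegral_Ioo_mul_left {a : ℝ} (ha : 0 < a) (g : ℝ → ℝ≥0∞) (ρ : ℝ) :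
    ∫⁻ t in Ioo 0 (a * ρ), g t ∂radialMeasure n =
      ENNReal.ofReal (a ^ (n + 1)) * ∫⁻ t in Ioo 0 ρ, g (a * t) ∂radialMeasure n := by
  have himage : (a * ·) '' Ioo 0 ρ = Ioo 0 (a * ρ) := by
    rw [image_mul_left_Ioo ha, mul_zero]
  rw [setLIntegral_Ioo_eq, setLIntegral_Ioo_eq, ← himage,
    lintegral_image_eq_lintegral_abs_deriv_mul (f' := fun _ ↦ a) measurableSet_Ioo
      (fun t _ ↦ by simpa using ((hasDerivAt_id t).const_mul a).hasDerivWithinAt)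
      (mul_right_injective₀ ha.ne').injOn,
    ← lintegral_const_mul' _ _ ENNReal.ofReal_ne_top]
  refine setLIntegral_congr_fun measurableSet_Ioo fun t _ ↦ ?_
  simp only [← mul_assoc]
  rw [abs_of_pos ha, ← ENNReal.ofReal_mul ha.le, ← ENNReal.ofReal_mul (by positivity)]
  congr 2
  ring

end radialMeasure

section PolarCoordinates

variable {E : Type*} [NormedAddCommGroup E] [NormedSpace ℝ E] [FiniteDimensional ℝ E]
  [Nontrivial E] [MeasurableSpace E] [BorelSpace E] (μ : Measure E) [μ.IsAddHaarMeasure]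

theorem lintegral_eq_lintegral_toSphere_radialMeasure {g : E → ℝ≥0∞} (hg : Measurable g) :
    ∫⁻ x, g x ∂μ =
      ∫⁻ θ, ∫⁻ t, g (t • θ.1) ∂radialMeasure (Module.finrank ℝ E - 1) ∂μ.toSphere := by
  set n := Module.finrank ℝ E - 1
  have hsymm (x : ({0}ᶜ : Set E)) : (x : E) =
      (homeomorphUnitSphereProd E x).2.1 • (homeomorphUnitSphereProd E x).1.1 := by
    rw [← homeomorphUnitSphereProd_symm_apply_coe, Homeomorph.symm_apply_apply]
  have hcont : Continuous fun y : sphere (0 : E) 1 × Ioi (0 : ℝ) ↦ y.2.1 • y.1.1 := by fun_prop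
  calc ∫⁻ x, g x ∂μ
      = ∫⁻ x : ({0}ᶜ : Set E), g x ∂μ.comap (↑) := by
        rw [lintegral_subtype_comap (measurableSet_singleton _).compl, restrict_compl_singleton]
    _ = ∫⁻ y, g (y.2.1 • y.1.1) ∂μ.toSphere.prod (.volumeIoiPow n) := by
        rw [← μ.measurePreserving_homeomorphUnitSphereProd.lintegral_comp_emb
          (Homeomorph.measurableEmbedding _)]
        exact lintegral_congr fun x ↦ congrArg g (hsymm x)
    _ = ∫⁻ θ, ∫⁻ t, g (t.1 • θ.1) ∂Measure.volumeIoiPow n ∂μ.toSphere :=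
        lintegral_prod _ (hg.comp hcont.measurable).aemeasurable
    _ = ∫⁻ θ, ∫⁻ t, g (t • θ.1) ∂radialMeasure n ∂μ.toSphere := by
        refine lintegral_congr fun θ ↦ ?_
        rw [radialMeasure.lintegral_eq, ← lintegral_subtype_comap measurableSet_Ioi]
        exact lintegral_withDensity_eq_lintegral_mul_non_measurable _ (by fun_prop)
          (ae_of_all _ fun _ ↦ ENNReal.ofReal_lt_top) _

theorem setLIntegral_eq_lintegral_toSphere_radialMeasure {Ω : Set E} (hΩ : MeasurableSet Ω)
    {g : E → ℝ≥0∞} (hg : Measurable g) (x₀ : E) :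
    ∫⁻ x in Ω, g x ∂μ = ∫⁻ θ, ∫⁻ t in {t | x₀ + t • θ.1 ∈ Ω},
      g (x₀ + t • θ.1) ∂radialMeasure (Module.finrank ℝ E - 1) ∂μ.toSphere := by
  rw [← lintegral_indicator hΩ, ← lintegral_add_left_eq_self _ x₀,
    lintegral_eq_lintegral_toSphere_radialMeasure μ (g := fun x ↦ Ω.indicator g (x₀ + x))
      ((hg.indicator hΩ).comp (measurable_const_add x₀))]
  refine lintegral_congr fun θ ↦ ?_
  have hray : Measurable fun t : ℝ ↦ x₀ + t • θ.1 := by fun_prop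
  exact lintegral_indicator (hray hΩ) (fun t ↦ g (x₀ + t • θ.1))

end PolarCoordinates

theorem deriv_eq_zero_of_forall_ge {f : ℝ → ℝ} {s t : ℝ} (hf : ∀ u, s ≤ u → f u = 0)
    (ht : s < t) : deriv f t = 0 := by
  rw [Filter.EventuallyEq.deriv_eq (f := fun _ ↦ 0)
    ((eventually_gt_nhds ht).mono fun u hu ↦ hf u (le_of_lt hu)), deriv_const]

section Truncation

theorem intervalIntegrable_norm_deriv_rpow {ν : Measure ℝ} [IsLocallyFiniteMeasure ν]
    {p : ℝ} (hp : 0 ≤ p) {f : ℝ → ℝ} {K : ℝ≥0} (hf : LipschitzWith K f) (a b : ℝ) :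
    IntervalIntegrable (fun t ↦ ‖deriv f t‖ ^ p) ν a b := by
  refine (intervalIntegrable_const (c := (K : ℝ) ^ p)).mono_fun
    ((measurable_deriv f).norm.pow_const p).aestronglyMeasurable (ae_of_all _ fun t ↦ ?_)
  beta_reduce
  rw [norm_of_nonneg (by positivity : 0 ≤ ‖deriv f t‖ ^ p),
    norm_of_nonneg (by positivity : 0 ≤ (K : ℝ) ^ p)]
  exact rpow_le_rpow (norm_nonneg _) (norm_deriv_le_of_lipschitz hf) hp

variable {ν : Measure ℝ} [NullSingletonClass ν]

theorem ofReal_intervalIntegral_norm_rpow {p : ℝ} (hp : 0 ≤ p) {h : ℝ → ℝ} {a b : ℝ}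
    (hab : a ≤ b) (hint : IntervalIntegrable (fun t ↦ ‖h t‖ ^ p) ν a b) :
    ENNReal.ofReal (∫ t in a..b, ‖h t‖ ^ p ∂ν) = ∫⁻ t in Ioo a b, ‖h t‖ₑ ^ p ∂ν := by
  rw [intervalIntegral.integral_of_le hab,
    ofReal_integral_eq_lintegral_ofReal hint.1 (ae_of_all _ fun t ↦ by positivity),
    ← setLIntegral_congr Ioo_ae_eq_Ioc]
  exact lintegral_congr fun t ↦ by
    rw [← ENNReal.ofReal_rpow_of_nonneg (norm_nonneg _) hp, ofReal_norm]

theorem setLIntegral_rpow_le_mul_iff {p q : ℝ} (hp : 0 ≤ p) (hq : 0 ≤ q) {φ f : ℝ → ℝ} {a b : ℝ}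
    (hab : a ≤ b) (hφ : IntervalIntegrable (fun t ↦ ‖φ t‖ ^ p) ν a b)
    (hf : IntervalIntegrable (fun t ↦ ‖f t‖ ^ p) ν a b) :
    ∫⁻ t in Ioo a b, ‖φ t‖ₑ ^ p ∂ν ≤ ENNReal.ofReal q * ∫⁻ t in Ioo a b, ‖f t‖ₑ ^ p ∂ν ↔
      ∫ t in a..b, (‖φ t‖ ^ p - q * ‖f t‖ ^ p) ∂ν ≤ 0 := by
  have hf0 : 0 ≤ ∫ t in a..b, ‖f t‖ ^ p ∂ν :=
    intervalIntegral.integral_nonneg hab fun t _ ↦ by positivity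
  rw [← ofReal_intervalIntegral_norm_rpow hp hab hφ, ← ofReal_intervalIntegral_norm_rpow hp hab hf,
    ← ENNReal.ofReal_mul hq, ENNReal.ofReal_le_ofReal_iff (mul_nonneg hq hf0),
    intervalIntegral.integral_sub hφ (hf.const_mul q), intervalIntegral.integral_const_mul,
    sub_nonpos]

theorem setLIntegral_rpow_lt_mul_iff {p q : ℝ} (hp : 0 ≤ p) (hq : 0 ≤ q) {φ f : ℝ → ℝ} {a b : ℝ}
    (hab : a ≤ b) (hφ : IntervalIntegrable (fun t ↦ ‖φ t‖ ^ p) ν a b)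
    (hf : IntervalIntegrable (fun t ↦ ‖f t‖ ^ p) ν a b) :
    ∫⁻ t in Ioo a b, ‖φ t‖ₑ ^ p ∂ν < ENNReal.ofReal q * ∫⁻ t in Ioo a b, ‖f t‖ₑ ^ p ∂ν ↔
      ∫ t in a..b, (‖φ t‖ ^ p - q * ‖f t‖ ^ p) ∂ν < 0 := by
  have hφ0 : 0 ≤ ∫ t in a..b, ‖φ t‖ ^ p ∂ν :=
    intervalIntegral.integral_nonneg hab fun t _ ↦ by positivity
  rw [← ofReal_intervalIntegral_norm_rpow hp hab hφ, ← ofReal_intervalIntegral_norm_rpow hp hab hf,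
    ← ENNReal.ofReal_mul hq, ENNReal.ofReal_lt_ofReal_iff_of_nonneg hφ0,
    intervalIntegral.integral_sub hφ (hf.const_mul q), intervalIntegral.integral_const_mul, sub_neg]

/-- The point `ρ₀` is a maximum point of the primitive of `g`. -/
theorem exists_forall_intervalIntegral_nonpos {g : ℝ → ℝ}
    (hg : ∀ a b, IntervalIntegrable g ν a b) {s : ℝ} (hs : 0 ≤ s) (hgs : ∀ t, s < t → g t = 0) :
    ∃ ρ₀ ∈ Icc 0 s, 0 ≤ ∫ t in 0..ρ₀, g t ∂ν ∧ ∀ ρ, ρ₀ ≤ ρ → ∫ t in ρ₀..ρ, g t ∂ν ≤ 0 := by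
  obtain ⟨ρ₀, hρ₀, hmax⟩ := isCompact_Icc.exists_isMaxOn (nonempty_Icc.2 hs)
    (intervalIntegral.continuous_primitive hg 0).continuousOn
  refine ⟨ρ₀, hρ₀, by simpa using hmax (left_mem_Icc.2 hs), fun ρ hρ ↦ ?_⟩
  have hle {σ : ℝ} (hσ : σ ∈ Icc 0 s) : ∫ t in ρ₀..σ, g t ∂ν ≤ 0 := by
    rw [← intervalIntegral.integral_interval_sub_left (hg 0 σ) (hg 0 ρ₀)]
    exact sub_nonpos.2 (hmax hσ)
  rcases le_total ρ s with hρs | hsρ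
  · exact hle ⟨hρ₀.1.trans hρ, hρs⟩
  · have htail : ∫ t in s..ρ, g t ∂ν = 0 := by
      rw [intervalIntegral.integral_of_le hsρ]
      exact setIntegral_eq_zero_of_forall_eq_zero fun t ht ↦ hgs t ht.1
    rw [← intervalIntegral.integral_add_adjacent_intervals (hg ρ₀ s) (hg s ρ), htail, add_zero]
    exact hle (right_mem_Icc.2 hs)

theorem deriv_comp_max_ae_eq (f : ℝ → ℝ) (ρ₀ : ℝ) :
    deriv (fun t ↦ f (max t ρ₀)) =ᵐ[ν] indicator (Ioi ρ₀) (deriv f) := by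
  filter_upwards [compl_mem_ae_iff.2 (measure_singleton ρ₀)] with t ht
  rcases lt_or_gt_of_ne ht with h | h
  · rw [indicator_of_notMem (s := Ioi ρ₀) h.not_gt, Filter.EventuallyEq.deriv_eq
      (f := fun _ ↦ f ρ₀) ((eventually_lt_nhds h).mono fun u hu ↦ congrArg f (max_eq_right hu.le)),
      deriv_const]
  · rw [indicator_of_mem (s := Ioi ρ₀) h]
    exact Filter.EventuallyEq.deriv_eq
      ((eventually_gt_nhds h).mono fun u hu ↦ congrArg f (max_eq_left (le_of_lt hu)))

theorem setLIntegral_deriv_comp_max {p : ℝ} (hp : 0 < p) (f : ℝ → ℝ) {ρ₀ : ℝ} (hρ₀ : 0 ≤ ρ₀)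
    (ρ : ℝ) :
    ∫⁻ t in Ioo 0 ρ, ‖deriv (fun t ↦ f (max t ρ₀)) t‖ₑ ^ p ∂ν =
      ∫⁻ t in Ioo ρ₀ ρ, ‖deriv f t‖ₑ ^ p ∂ν := by
  have hset : Ioi ρ₀ ∩ Ioo 0 ρ = Ioo ρ₀ ρ := by
    ext t
    exact ⟨fun h ↦ ⟨h.1, h.2.2⟩, fun h ↦ ⟨h.1, hρ₀.trans_lt h.1, h.2⟩⟩
  rw [← hset, ← setLIntegral_indicator measurableSet_Ioi]
  refine lintegral_congr_ae ?_
  filter_upwards [ae_restrict_of_ae (deriv_comp_max_ae_eq f ρ₀)] with t ht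
  rw [ht]
  by_cases h : ρ₀ < t <;> simp [h, hp]

/-- Flattening `f` up to a maximum point of `ρ ↦ ∫₀^ρ (|f'| ^ p - q |f| ^ p) dν` turns the global
inequality into one on every initial interval. -/
theorem exists_forall_setLIntegral_deriv_comp_max_le [IsLocallyFiniteMeasure ν] {p q : ℝ}
    (hp : 0 < p) (hq : 0 ≤ q) {f : ℝ → ℝ} {K : ℝ≥0} (hf : LipschitzWith K f) (hanti : Antitone f)
    {s : ℝ} (hs : 0 ≤ s) (hfs : ∀ t, s ≤ t → f t = 0)
    (hlt : ∫⁻ t in Ioo 0 s, ‖deriv f t‖ₑ ^ p ∂ν <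
      ENNReal.ofReal q * ∫⁻ t in Ioo 0 s, ‖f t‖ₑ ^ p ∂ν) :
    ∃ ρ₀, 0 ≤ ρ₀ ∧ 0 < f ρ₀ ∧ ∀ ρ,
      ∫⁻ t in Ioo 0 ρ, ‖deriv (fun t ↦ f (max t ρ₀)) t‖ₑ ^ p ∂ν ≤
        ENNReal.ofReal q * ∫⁻ t in Ioo 0 ρ, ‖f (max t ρ₀)‖ₑ ^ p ∂ν := by
  have hderiv := intervalIntegrable_norm_deriv_rpow (ν := ν) hp.le hf
  have hpow (a b : ℝ) : IntervalIntegrable (fun t ↦ ‖f t‖ ^ p) ν a b :=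
    (hf.continuous.norm.rpow_const fun _ ↦ Or.inr hp.le).intervalIntegrable a b
  have hdiff (a b : ℝ) := (hderiv a b).sub ((hpow a b).const_mul q)
  have hvanish {a t : ℝ} (ha : ∀ u, a ≤ u → f u = 0) (ht : a < t) :
      ‖deriv f t‖ ^ p - q * ‖f t‖ ^ p = 0 := by
    simp [deriv_eq_zero_of_forall_ge ha ht, ha t ht.le, hp.ne']
  obtain ⟨ρ₀, hρ₀, hinit, htail⟩ := exists_forall_intervalIntegral_nonpos hdiff hs
    fun t ht ↦ hvanish hfs ht
  refine ⟨ρ₀, hρ₀.1, ?_, fun ρ ↦ ?_⟩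
  · by_contra! hle
    have hzero (u : ℝ) (hu : ρ₀ ≤ u) : f u = 0 :=
      le_antisymm ((hanti hu).trans hle)
        ((hfs _ (le_max_right u s)).symm.le.trans (hanti (le_max_left u s)))
    have hrest : ∫ t in ρ₀..s, (‖deriv f t‖ ^ p - q * ‖f t‖ ^ p) ∂ν = 0 := by
      rw [intervalIntegral.integral_of_le hρ₀.2]
      exact setIntegral_eq_zero_of_forall_eq_zero fun t ht ↦ hvanish hzero ht.1
    have hneg := (setLIntegral_rpow_lt_mul_iff hp.le hq hs (hderiv 0 s) (hpow 0 s)).1 hlt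
    rw [← intervalIntegral.integral_add_adjacent_intervals (hdiff 0 ρ₀) (hdiff ρ₀ s), hrest,
      add_zero] at hneg
    exact hneg.not_ge hinit
  · rw [setLIntegral_deriv_comp_max hp f hρ₀.1]
    rcases le_total ρ ρ₀ with hρ | hρ
    · simp [Ioo_eq_empty_of_le hρ]
    calc ∫⁻ t in Ioo ρ₀ ρ, ‖deriv f t‖ₑ ^ p ∂ν
        ≤ ENNReal.ofReal q * ∫⁻ t in Ioo ρ₀ ρ, ‖f t‖ₑ ^ p ∂ν :=
          (setLIntegral_rpow_le_mul_iff hp.le hq hρ (hderiv _ _) (hpow _ _)).2 (htail ρ hρ)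
      _ = ENNReal.ofReal q * ∫⁻ t in Ioo ρ₀ ρ, ‖f (max t ρ₀)‖ₑ ^ p ∂ν := by
          congr 1
          exact setLIntegral_congr_fun measurableSet_Ioo fun t ht ↦ by
            simp only [max_eq_left ht.1.le]
      _ ≤ ENNReal.ofReal q * ∫⁻ t in Ioo 0 ρ, ‖f (max t ρ₀)‖ₑ ^ p ∂ν := by
          gcongr
          exact hρ₀.1

end Truncation

section DecreasingMajorant

variable {w : ℝ → ℝ} {s : ℝ}

theorem antitone_integral_abs_deriv (hw : ContDiff ℝ 1 w) :
    Antitone fun t ↦ ∫ u in t..s, |deriv w u| := by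
  have hint (a b : ℝ) : IntervalIntegrable (fun u ↦ |deriv w u|) volume a b :=
    (hw.continuous_deriv le_rfl).abs.intervalIntegrable a b
  intro a b hab
  simp only [← intervalIntegral.integral_add_adjacent_intervals (hint a b) (hint b s)]
  exact le_add_of_nonneg_left (intervalIntegral.integral_nonneg hab fun u _ ↦ abs_nonneg _)

theorem hasDerivAt_integral_abs_deriv (hw : ContDiff ℝ 1 w) (t : ℝ) :
    HasDerivAt (fun t ↦ ∫ u in t..s, |deriv w u|) (-|deriv w t|) t :=
  intervalIntegral.integral_hasDerivAt_left
    ((hw.continuous_deriv le_rfl).abs.intervalIntegrable t s)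
    (hw.continuous_deriv le_rfl).abs.aestronglyMeasurable.stronglyMeasurableAtFilter
    (hw.continuous_deriv le_rfl).abs.continuousAt

theorem abs_le_integral_abs_deriv (hw : ContDiff ℝ 1 w) (hws : w s = 0) {t : ℝ} (ht : t ≤ s) :
    |w t| ≤ ∫ u in t..s, |deriv w u| := by
  have hftc : ∫ u in t..s, deriv w u = w s - w t :=
    intervalIntegral.integral_deriv_eq_sub (fun u _ ↦ hw.differentiable one_ne_zero u)
      ((hw.continuous_deriv le_rfl).intervalIntegrable t s)
  calc |w t| = |∫ u in t..s, deriv w u| := by rw [hftc, hws, zero_sub, abs_neg]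
    _ ≤ ∫ u in t..s, |deriv w u| := intervalIntegral.abs_integral_le_integral_abs ht

end DecreasingMajorant

/-- A one-dimensional substitute for the radial first Dirichlet eigenfunction of a ball of radius
`r` in `ℝ ^ (n + 1)`: a decreasing profile, vanishing near `[r, ∞)`, whose `p`-energy is at most
`Q` times its `p`-mass on every concentric ball. -/
structure IsRadialProfile (n : ℕ) (p : ℝ) (Q : ℝ≥0∞) (r : ℝ) (F : ℝ → ℝ) : Prop where
  antitone : Antitone F
  exists_lipschitzWith : ∃ K, LipschitzWith K F
  pos_zero : 0 < F 0
  exists_eq_zero : ∃ s < r, ∀ t, s ≤ t → F t = 0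
  energy_le : ∀ ρ, ∫⁻ t in Ioo 0 ρ, ‖deriv F t‖ₑ ^ p ∂radialMeasure n ≤
    Q * ∫⁻ t in Ioo 0 ρ, ‖F t‖ₑ ^ p ∂radialMeasure n

namespace IsRadialProfile

variable {n : ℕ} {p : ℝ} {Q : ℝ≥0∞} {r : ℝ} {F : ℝ → ℝ}

theorem nonneg (hF : IsRadialProfile n p Q r F) (t : ℝ) : 0 ≤ F t := by
  obtain ⟨s, -, hs⟩ := hF.exists_eq_zero
  exact (hs _ (le_max_right t s)).symm.le.trans (hF.antitone (le_max_left t s))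

theorem antitone_enorm_rpow (hF : IsRadialProfile n p Q r F) (hp : 0 ≤ p) :
    Antitone fun t ↦ ‖F t‖ₑ ^ p := fun s t hst ↦ by
  simp only [Real.enorm_of_nonneg (hF.nonneg _)]
  gcongr
  exact hF.antitone hst

theorem energy_comp_mul_left_le (hF : IsRadialProfile n p Q r F) {k : ℝ} (hk : 0 < k) (ρ : ℝ) :
    ∫⁻ t in Ioo 0 ρ, ‖deriv F (k * t)‖ₑ ^ p ∂radialMeasure n ≤
      Q * ∫⁻ t in Ioo 0 ρ, ‖F (k * t)‖ₑ ^ p ∂radialMeasure n := by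
  have hscale : ENNReal.ofReal (k ^ (n + 1)) ≠ 0 := by simpa using pow_pos hk (n + 1)
  rw [← ENNReal.mul_le_mul_iff_right hscale ENNReal.ofReal_ne_top, mul_left_comm,
    ← radialMeasure.setLIntegral_Ioo_mul_left hk fun t ↦ ‖deriv F t‖ₑ ^ p,
    ← radialMeasure.setLIntegral_Ioo_mul_left hk fun t ↦ ‖F t‖ₑ ^ p]
  exact hF.energy_le (k * ρ)

theorem comp_mul_left (hF : IsRadialProfile n p Q r F) (hp : 0 ≤ p) {k : ℝ} (hk : 0 < k) :
    IsRadialProfile n p (ENNReal.ofReal (k ^ p) * Q) (r / k) fun t ↦ F (k * t) where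
  antitone := hF.antitone.comp_monotone (monotone_mul_left_of_nonneg hk.le)
  exists_lipschitzWith := by
    obtain ⟨K, hK⟩ := hF.exists_lipschitzWith
    exact ⟨K * ‖k‖₊, hK.comp (lipschitzWith_smul k)⟩
  pos_zero := by simpa using hF.pos_zero
  exists_eq_zero := by
    obtain ⟨s, hsr, hs⟩ := hF.exists_eq_zero
    exact ⟨s / k, (div_lt_div_iff_of_pos_right hk).2 hsr, fun t ht ↦
      hs _ ((div_le_iff₀' hk).1 ht)⟩
  energy_le ρ := by
    have hderiv (t : ℝ) : ‖deriv (fun t ↦ F (k * t)) t‖ₑ ^ p =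
        ENNReal.ofReal (k ^ p) * ‖deriv F (k * t)‖ₑ ^ p := by
      rw [deriv_comp_mul_left, smul_eq_mul, enorm_mul, ENNReal.mul_rpow_of_nonneg _ _ hp,
        Real.enorm_of_nonneg hk.le, ENNReal.ofReal_rpow_of_nonneg hk.le hp]
    rw [lintegral_congr hderiv, lintegral_const_mul' _ _ ENNReal.ofReal_ne_top, mul_assoc]
    gcongr
    exact hF.energy_comp_mul_left_le hk ρ

end IsRadialProfile

theorem radialMeasure.setLIntegral_Ioo_eq_lintegral {n : ℕ} {g : ℝ → ℝ≥0∞} {s : ℝ}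
    (hg : ∀ t, s < t → g t = 0) :
    ∫⁻ t in Ioo 0 s, g t ∂radialMeasure n = ∫⁻ t, g t ∂radialMeasure n := by
  rw [setLIntegral_congr Ioo_ae_eq_Ioc, ← Ioi_inter_Iic, inter_comm,
    ← Measure.restrict_restrict measurableSet_Iic, restrict_Ioi,
    ← lintegral_indicator measurableSet_Iic]
  refine lintegral_congr fun t ↦ ?_
  rcases le_or_gt t s with h | h
  · exact indicator_of_mem (s := Iic s) h g
  · rw [indicator_of_notMem (s := Iic s) h.not_ge, hg t h]

theorem exists_isRadialProfile_of_lintegral_deriv_lt {n : ℕ} {p q r : ℝ} (hp : 0 < p) (hq : 0 ≤ q)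
    {f : ℝ → ℝ} {K : ℝ≥0} (hf : LipschitzWith K f) (hanti : Antitone f) {s : ℝ} (hs : 0 ≤ s)
    (hsr : s < r) (hfs : ∀ t, s ≤ t → f t = 0)
    (hlt : ∫⁻ t, ‖deriv f t‖ₑ ^ p ∂radialMeasure n <
      ENNReal.ofReal q * ∫⁻ t, ‖f t‖ₑ ^ p ∂radialMeasure n) :
    ∃ F, IsRadialProfile n p (ENNReal.ofReal q) r F := by
  rw [← radialMeasure.setLIntegral_Ioo_eq_lintegral (s := s) fun t ht ↦ by
      rw [deriv_eq_zero_of_forall_ge hfs ht, enorm_zero, ENNReal.zero_rpow_of_pos hp],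
    ← radialMeasure.setLIntegral_Ioo_eq_lintegral (s := s) fun t ht ↦ by
      rw [hfs t ht.le, enorm_zero, ENNReal.zero_rpow_of_pos hp]] at hlt
  obtain ⟨ρ₀, hρ₀, hpos, henergy⟩ :=
    exists_forall_setLIntegral_deriv_comp_max_le hp hq hf hanti hs hfs hlt
  refine ⟨fun t ↦ f (max t ρ₀), ?_, ⟨K, ?_⟩, by rwa [max_eq_right hρ₀], ⟨s, hsr, ?_⟩, henergy⟩
  · exact hanti.comp_monotone fun a b h ↦ max_le_max_right ρ₀ h
  · exact mul_one K ▸ hf.comp (LipschitzWith.id.max_const ρ₀)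
  · exact fun t ht ↦ hfs _ (ht.trans (le_max_left t ρ₀))

/-- The total variation of `w` on `[t, s]`, as a function of `t`, is decreasing and dominates `|w|`,
while its derivative has the same absolute value as that of `w`. -/
theorem exists_isRadialProfile_of_contDiff {n : ℕ} {p q r : ℝ} (hp : 0 < p) (hq : 0 ≤ q)
    {w : ℝ → ℝ} (hw : ContDiff ℝ 1 w) (hwc : HasCompactSupport w) {s : ℝ} (hs : 0 ≤ s)
    (hsr : s < r) (hws : ∀ t, s ≤ t → w t = 0)
    (hlt : ∫⁻ t, ‖deriv w t‖ₑ ^ p ∂radialMeasure n <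
      ENNReal.ofReal q * ∫⁻ t, ‖w t‖ₑ ^ p ∂radialMeasure n) :
    ∃ F, IsRadialProfile n p (ENNReal.ofReal q) r F := by
  set f : ℝ → ℝ := fun t ↦ ∫ u in t..s, |deriv w u|
  have hderiv (t : ℝ) : HasDerivAt f (-|deriv w t|) t := hasDerivAt_integral_abs_deriv hw t
  have hnorm (t : ℝ) : ‖deriv f t‖ = ‖deriv w t‖ := by
    rw [(hderiv t).deriv, norm_neg, norm_eq_abs, abs_abs, norm_eq_abs]
  have hfs (t : ℝ) (ht : s ≤ t) : f t = 0 := by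
    change ∫ u in t..s, |deriv w u| = 0
    rw [intervalIntegral.integral_of_ge ht, neg_eq_zero]
    exact setIntegral_eq_zero_of_forall_eq_zero fun u hu ↦ by
      rw [deriv_eq_zero_of_forall_ge hws hu.1, abs_zero]
  have hle (t : ℝ) : ‖w t‖ₑ ≤ ‖f t‖ₑ := by
    rw [enorm_le_iff_norm_le]
    rcases le_total t s with ht | ht
    · exact (abs_le_integral_abs_deriv hw (hws s le_rfl) ht).trans (le_abs_self _)
    · rw [hws t ht, norm_zero]
      exact norm_nonneg _
  obtain ⟨C, hC⟩ := (hw.continuous_deriv le_rfl).bounded_above_of_compact_support hwc.deriv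
  have hlip : LipschitzWith C.toNNReal f := lipschitzWith_of_nnnorm_deriv_le
    (fun t ↦ (hderiv t).differentiableAt) fun t ↦ NNReal.coe_le_coe.1 <| by
      rw [coe_nnnorm, hnorm]
      exact (hC t).trans (le_coe_toNNReal C)
  refine exists_isRadialProfile_of_lintegral_deriv_lt hp hq hlip (antitone_integral_abs_deriv hw)
    hs hsr hfs ?_
  calc ∫⁻ t, ‖deriv f t‖ₑ ^ p ∂radialMeasure n
      = ∫⁻ t, ‖deriv w t‖ₑ ^ p ∂radialMeasure n :=
        lintegral_congr fun t ↦ by rw [← ofReal_norm, hnorm, ofReal_norm]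
    _ < ENNReal.ofReal q * ∫⁻ t, ‖w t‖ₑ ^ p ∂radialMeasure n := hlt
    _ ≤ ENNReal.ofReal q * ∫⁻ t, ‖f t‖ₑ ^ p ∂radialMeasure n := by
        gcongr with t
        exact hle t

section RaySelection

variable {E : Type*} [NormedAddCommGroup E] [NormedSpace ℝ E] [FiniteDimensional ℝ E]
  [Nontrivial E] [MeasurableSpace E] [BorelSpace E] (μ : Measure E) [μ.IsAddHaarMeasure]

theorem exists_ray_lintegral_lt {g h : E → ℝ≥0∞} (hg : Measurable g) (hh : Measurable h) (c : E)
    (hlt : ∫⁻ x, g x ∂μ < ∫⁻ x, h x ∂μ) :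
    ∃ θ : sphere (0 : E) 1, ∫⁻ t, g (c + t • θ.1) ∂radialMeasure (Module.finrank ℝ E - 1) <
      ∫⁻ t, h (c + t • θ.1) ∂radialMeasure (Module.finrank ℝ E - 1) := by
  by_contra! hle
  rw [← lintegral_add_left_eq_self g c, ← lintegral_add_left_eq_self h c,
    lintegral_eq_lintegral_toSphere_radialMeasure μ (g := fun x ↦ g (c + x)) (by fun_prop),
    lintegral_eq_lintegral_toSphere_radialMeasure μ (g := fun x ↦ h (c + x)) (by fun_prop)] at hlt
  exact hlt.not_ge (lintegral_mono hle)

theorem exists_isRadialProfile {p q r : ℝ} (hp : 0 < p) (hq : 0 ≤ q) {v : E → ℝ}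
    (hv : ContDiff ℝ 1 v) (hvc : HasCompactSupport v) {c : E} (hr : 0 < r)
    (hvr : tsupport v ⊆ ball c r)
    (hlt : ∫⁻ x, ‖fderiv ℝ v x‖ₑ ^ p ∂μ < ENNReal.ofReal q * ∫⁻ x, ‖v x‖ₑ ^ p ∂μ) :
    ∃ F, IsRadialProfile (Module.finrank ℝ E - 1) p (ENNReal.ofReal q) r F := by
  rw [← lintegral_const_mul' _ _ ENNReal.ofReal_ne_top] at hlt
  have hv' := hv.continuous_fderiv one_ne_zero
  obtain ⟨θ, hθ⟩ := exists_ray_lintegral_lt μ (hv'.enorm.measurable.pow_const p)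
    ((hv.continuous.enorm.measurable.pow_const p).const_mul _) c hlt
  rw [lintegral_const_mul' _ _ ENNReal.ofReal_ne_top] at hθ
  have hθ1 : ‖θ.1‖ = 1 := norm_eq_of_mem_sphere θ
  have hray : Isometry fun t : ℝ ↦ c + t • θ.1 := Isometry.of_dist_eq fun t u ↦ by
    rw [dist_add_left, dist_eq_norm, ← sub_smul, norm_smul, hθ1, mul_one, dist_eq_norm]
  have hderiv (t : ℝ) : deriv (fun t ↦ v (c + t • θ.1)) t = fderiv ℝ v (c + t • θ.1) θ.1 := by
    have hline : HasDerivAt (fun t : ℝ ↦ c + t • θ.1) θ.1 t := by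
      simpa using ((hasDerivAt_id t).smul_const θ.1).const_add c
    exact ((hv.differentiable one_ne_zero _).hasFDerivAt.comp_hasDerivAt t hline).deriv
  obtain ⟨s, ⟨hs, hsr⟩, hvs⟩ := exists_pos_lt_subset_ball hr (isClosed_tsupport v) hvr
  refine exists_isRadialProfile_of_contDiff hp hq (w := fun t ↦ v (c + t • θ.1))
    (hv.comp (by fun_prop)) (hvc.comp_isClosedEmbedding hray.isClosedEmbedding) hs.le hsr
    (fun t ht ↦ image_eq_zero_of_notMem_tsupport fun h ↦ ?_) (lt_of_le_of_lt ?_ hθ)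
  · have := hvs h
    rw [mem_ball, dist_self_add_left, norm_smul, hθ1, mul_one] at this
    exact (this.trans_le ht).not_ge (le_abs_self t)
  · gcongr with t
    rw [hderiv, enorm_le_iff_norm_le]
    simpa [hθ1] using (fderiv ℝ v (c + t • θ.1)).le_opNorm θ.1

end RaySelection

section Poincare

variable {E : Type*} [NormedAddCommGroup E] [NormedSpace ℝ E]

theorem enorm_sub_rpow_le_lintegral_fderiv {p : ℝ} (hp : 1 ≤ p) {v : E → ℝ}
    (hv : ContDiff ℝ 1 v) (x a : E) :
    ‖v (x + a) - v x‖ₑ ^ p ≤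
      ‖a‖ₑ ^ p * ∫⁻ t : ℝ in Icc 0 1, ‖fderiv ℝ v (x + t • a)‖ₑ ^ p := by
  have hderiv (t : ℝ) : deriv (fun t : ℝ ↦ v (x + t • a)) t = fderiv ℝ v (x + t • a) a := by
    have hline : HasDerivAt (fun t : ℝ ↦ x + t • a) a t := by
      simpa using ((hasDerivAt_id t).smul_const a).const_add x
    exact ((hv.differentiable one_ne_zero _).hasFDerivAt.comp_hasDerivAt t hline).deriv
  have hcont : Continuous fun t : ℝ ↦ fderiv ℝ v (x + t • a) :=
    (hv.continuous_fderiv one_ne_zero).comp (by fun_prop)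
  have : IsProbabilityMeasure (volume.restrict (Icc (0 : ℝ) 1)) := ⟨by simp⟩
  have hbound : ‖v (x + a) - v x‖ₑ ≤
      ‖a‖ₑ * ∫⁻ t : ℝ in Icc 0 1, ‖fderiv ℝ v (x + t • a)‖ₑ := by
    rw [← lintegral_const_mul' _ _ enorm_ne_top]
    calc ‖v (x + a) - v x‖ₑ
        ≤ ∫⁻ t : ℝ in Icc 0 1, ‖deriv (fun t : ℝ ↦ v (x + t • a)) t‖ₑ := by
          simpa using enorm_sub_le_lintegral_deriv_of_contDiffOn_Icc
            (f := fun t : ℝ ↦ v (x + t • a))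
            (hv.comp (by fun_prop)).contDiffOn (zero_le_one' ℝ)
      _ ≤ ∫⁻ t : ℝ in Icc 0 1, ‖a‖ₑ * ‖fderiv ℝ v (x + t • a)‖ₑ := by
          gcongr with t
          rw [hderiv, mul_comm]
          exact ContinuousLinearMap.le_opENorm _ _
  have hjensen : ∫⁻ t : ℝ in Icc 0 1, ‖fderiv ℝ v (x + t • a)‖ₑ ≤
      (∫⁻ t : ℝ in Icc 0 1, ‖fderiv ℝ v (x + t • a)‖ₑ ^ p) ^ (1 / p) := by
    simpa [eLpNorm'] using
      eLpNorm'_le_eLpNorm'_of_exponent_le one_pos hp _ hcont.aestronglyMeasurable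
  have hp0 : 0 < p := one_pos.trans_le hp
  calc ‖v (x + a) - v x‖ₑ ^ p
      ≤ (‖a‖ₑ * (∫⁻ t : ℝ in Icc 0 1, ‖fderiv ℝ v (x + t • a)‖ₑ ^ p) ^ (1 / p)) ^ p := by
        gcongr
        exact hbound.trans (by gcongr)
    _ = ‖a‖ₑ ^ p * ∫⁻ t : ℝ in Icc 0 1, ‖fderiv ℝ v (x + t • a)‖ₑ ^ p := by
        rw [ENNReal.mul_rpow_of_nonneg _ _ hp0.le, ← ENNReal.rpow_mul, one_div,
          inv_mul_cancel₀ hp0.ne', ENNReal.rpow_one]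

variable [MeasurableSpace E] [BorelSpace E] (μ : Measure E)
  [μ.IsAddRightInvariant] [SFinite μ]

theorem lintegral_rpow_le_of_translate_eq_zero {p : ℝ} (hp : 1 ≤ p) {v : E → ℝ}
    (hv : ContDiff ℝ 1 v) {a : E} (ha : ∀ x, v x ≠ 0 → v (x + a) = 0) :
    ∫⁻ x, ‖v x‖ₑ ^ p ∂μ ≤ ‖a‖ₑ ^ p * ∫⁻ x, ‖fderiv ℝ v x‖ₑ ^ p ∂μ := by
  have hmeas : Measurable fun y : E × ℝ ↦ ‖fderiv ℝ v (y.1 + y.2 • a)‖ₑ ^ p :=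
    (((hv.continuous_fderiv one_ne_zero).comp (by fun_prop)).enorm.measurable.pow_const p)
  calc ∫⁻ x, ‖v x‖ₑ ^ p ∂μ
      ≤ ∫⁻ x, ‖v (x + a) - v x‖ₑ ^ p ∂μ := by
        refine lintegral_mono fun x ↦ ?_
        by_cases hx : v x = 0
        · simp [hx, one_pos.trans_le hp]
        · rw [ha x hx, zero_sub, enorm_neg]
    _ ≤ ∫⁻ x, ‖a‖ₑ ^ p * (∫⁻ t : ℝ in Icc 0 1, ‖fderiv ℝ v (x + t • a)‖ₑ ^ p) ∂μ :=
        lintegral_mono fun x ↦ enorm_sub_rpow_le_lintegral_fderiv hp hv x a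
    _ = ‖a‖ₑ ^ p * ∫⁻ t : ℝ in Icc 0 1, ∫⁻ x, ‖fderiv ℝ v (x + t • a)‖ₑ ^ p ∂μ := by
        rw [lintegral_const_mul' _ _ (ENNReal.rpow_ne_top_of_nonneg
          (zero_le_one.trans hp) enorm_ne_top), lintegral_lintegral_swap hmeas.aemeasurable]
    _ = ‖a‖ₑ ^ p * ∫⁻ x, ‖fderiv ℝ v x‖ₑ ^ p ∂μ := by
        simp only [lintegral_add_right_eq_self fun x ↦ ‖fderiv ℝ v x‖ₑ ^ p]
        simp

end Poincare

section RayleighQuotient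

variable {N : ℕ} {p : ℝ} {Ω : Set (EuclideanSpace ℝ (Fin N))} {v : EuclideanSpace ℝ (Fin N) → ℝ}

theorem integral_norm_rpow_eq_toReal {α F : Type*} [MeasurableSpace α] {μ : Measure α}
    [NormedAddCommGroup F] (hp : 0 ≤ p) {g : α → F} (hg : AEStronglyMeasurable g μ) :
    ∫ x, ‖g x‖ ^ p ∂μ = (∫⁻ x, ‖g x‖ₑ ^ p ∂μ).toReal := by
  rw [integral_eq_lintegral_of_nonneg_ae (ae_of_all _ fun x ↦ by positivity)
    (hg.norm.aemeasurable.pow_const p).aestronglyMeasurable]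
  congr 1
  exact lintegral_congr fun x ↦ by
    rw [← ENNReal.ofReal_rpow_of_nonneg (norm_nonneg _) hp, ofReal_norm]

theorem rayleighQuot_self_eq (hp : 0 < p) (hv : AEStronglyMeasurable v (volume.restrict Ω)) :
    rayleighQuot p p Ω v =
      (∫⁻ x in Ω, ‖fderiv ℝ v x‖ₑ ^ p).toReal / (∫⁻ x in Ω, ‖v x‖ₑ ^ p).toReal := by
  rw [rayleighQuot, div_self hp.ne', rpow_one, integral_norm_rpow_eq_toReal hp.le
    (measurable_fderiv ℝ v).stronglyMeasurable.aestronglyMeasurable]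
  simp only [← norm_eq_abs]
  rw [integral_norm_rpow_eq_toReal hp.le hv]

theorem rayleighQuot_nonneg (q : ℝ) : 0 ≤ rayleighQuot p q Ω v :=
  div_nonneg (integral_nonneg fun _ ↦ by positivity)
    (rpow_nonneg (integral_nonneg fun _ ↦ by positivity) _)

theorem rayleighQuot_self_eq_of_tsupport_subset (hp : 0 < p) (hv : Continuous v)
    (hvΩ : tsupport v ⊆ Ω) : rayleighQuot p p Ω v =
      (∫⁻ x, ‖fderiv ℝ v x‖ₑ ^ p).toReal / (∫⁻ x, ‖v x‖ₑ ^ p).toReal := by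
  rw [rayleighQuot_self_eq hp hv.aestronglyMeasurable, setLIntegral_eq_of_support_subset,
    setLIntegral_eq_of_support_subset]
  · refine Function.support_subset_iff'.2 fun x hx ↦ ?_
    simp [image_eq_zero_of_notMem_tsupport fun h ↦ hx (hvΩ h), hp]
  · refine Function.support_subset_iff'.2 fun x hx ↦ ?_
    rw [fderiv_of_notMem_tsupport ℝ fun h ↦ hx (hvΩ h), ← ofReal_norm, norm_zero,
      ENNReal.ofReal_zero, ENNReal.zero_rpow_of_pos hp]

end RayleighQuotient

theorem setLIntegral_enorm_rpow_pos {X F : Type*} [TopologicalSpace X] [MeasurableSpace X]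
    [BorelSpace X] {μ : Measure X} [μ.IsOpenPosMeasure] [NormedAddCommGroup F] {p : ℝ}
    (hp : 0 < p) {Ω : Set X} (hΩ : IsOpen Ω) {g : X → F} (hg : Continuous g) {x : X} (hxΩ : x ∈ Ω)
    (hx : g x ≠ 0) : 0 < ∫⁻ x in Ω, ‖g x‖ₑ ^ p ∂μ := by
  rw [setLIntegral_pos_iff (hg.enorm.measurable.pow_const p)]
  have hsupp : Function.support (fun x ↦ ‖g x‖ₑ ^ p) = Function.support g := by
    ext y
    simp [hp, ENNReal.rpow_eq_zero_iff]
  rw [hsupp]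
  exact (hg.isOpen_support.inter hΩ).measure_pos μ ⟨x, hx, hxΩ⟩

theorem setLIntegral_enorm_rpow_lt_top {X F : Type*} [PseudoMetricSpace X] [ProperSpace X]
    [MeasurableSpace X] {μ : Measure X} [IsFiniteMeasureOnCompacts μ] [NormedAddCommGroup F]
    {p : ℝ} (hp : 0 ≤ p) {Ω : Set X} (hΩ : Bornology.IsBounded Ω) {g : X → F}
    (hg : Continuous g) : ∫⁻ x in Ω, ‖g x‖ₑ ^ p ∂μ < ∞ := by
  obtain ⟨C, hC⟩ := (hΩ.isCompact_closure.image hg).isBounded.exists_norm_le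
  refine setLIntegral_lt_top_of_le_nnreal hΩ.measure_lt_top.ne ⟨C.toNNReal ^ p, fun x hx ↦ ?_⟩
  rw [ENNReal.coe_rpow_of_nonneg _ hp]
  gcongr
  rw [enorm_le_coe, ← NNReal.coe_le_coe, coe_nnnorm]
  exact (hC _ (mem_image_of_mem g (subset_closure hx))).trans (le_coe_toNNReal C)

theorem lintegral_enorm_rpow_lt_top_of_hasCompactSupport {X F : Type*} [TopologicalSpace X]
    [MeasurableSpace X] [OpensMeasurableSpace X] {μ : Measure X} [IsFiniteMeasureOnCompacts μ]
    [NormedAddCommGroup F] [SecondCountableTopologyEither X F] {p : ℝ} (hp : 0 < p) {g : X → F}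
    (hg : Continuous g) (hgc : HasCompactSupport g) : ∫⁻ x, ‖g x‖ₑ ^ p ∂μ < ∞ := by
  have hmem := (hg.memLp_of_hasCompactSupport (μ := μ) hgc (p := ENNReal.ofReal p)).eLpNorm_lt_top
  have := lintegral_rpow_enorm_lt_top_of_eLpNorm_lt_top (by simpa using hp)
    ENNReal.ofReal_ne_top hmem
  rwa [ENNReal.toReal_ofReal hp.le] at this

section DirichletEigenvalue

variable {N : ℕ} {p q r : ℝ} {c : EuclideanSpace ℝ (Fin N)}

theorem rayleighQuot_self_lt_iff {Ω : Set (EuclideanSpace ℝ (Fin N))} (hp : 0 < p)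
    {v : EuclideanSpace ℝ (Fin N) → ℝ} (hv : ContDiff ℝ 1 v) (hvc : HasCompactSupport v)
    (hvΩ : tsupport v ⊆ Ω) (hv0 : v ≠ 0) :
    rayleighQuot p p Ω v < q ↔
      ∫⁻ x, ‖fderiv ℝ v x‖ₑ ^ p < ENNReal.ofReal q * ∫⁻ x, ‖v x‖ₑ ^ p := by
  obtain ⟨x, hx⟩ := Function.ne_iff.1 hv0
  have henergy := lintegral_enorm_rpow_lt_top_of_hasCompactSupport (μ := volume) hp
    (hv.continuous_fderiv one_ne_zero) (hvc.fderiv ℝ)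
  have hmass := lintegral_enorm_rpow_lt_top_of_hasCompactSupport (μ := volume) hp
    hv.continuous hvc
  have hmass_pos := setLIntegral_enorm_rpow_pos (μ := volume) hp isOpen_univ hv.continuous
    (mem_univ x) hx
  rw [setLIntegral_univ] at hmass_pos
  rw [rayleighQuot_self_eq_of_tsupport_subset hp hv.continuous hvΩ,
    div_lt_iff₀ (ENNReal.toReal_pos hmass_pos.ne' hmass.ne)]
  rcases le_or_gt 0 q with hq | hq
  · rw [← ENNReal.toReal_lt_toReal henergy.ne (by finiteness), ENNReal.toReal_mul,
      ENNReal.toReal_ofReal hq]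
  · rw [ENNReal.ofReal_of_nonpos hq.le, zero_mul]
    exact iff_of_false
      ((mul_nonpos_of_nonpos_of_nonneg hq.le ENNReal.toReal_nonneg).trans
        ENNReal.toReal_nonneg).not_gt not_lt_zero

theorem lambdaPQ_ball_set_nonempty (p q : ℝ) (c : EuclideanSpace ℝ (Fin N)) (hr : 0 < r) :
    {R : ℝ | ∃ v : EuclideanSpace ℝ (Fin N) → ℝ, ContDiff ℝ (⊤ : ℕ∞) v ∧ HasCompactSupport v ∧
      tsupport v ⊆ ball c r ∧ (∃ x ∈ ball c r, v x ≠ 0) ∧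
      R = rayleighQuot p q (ball c r) v}.Nonempty := by
  let b : ContDiffBump c := ⟨r / 4, r / 2, by positivity, by linarith⟩
  refine ⟨_, b, b.contDiff, b.hasCompactSupport, ?_, ⟨c, mem_ball_self hr, ?_⟩, rfl⟩
  · rw [b.tsupport_eq]
    exact closedBall_subset_ball (half_lt_self hr)
  · rw [b.one_of_mem_closedBall (mem_closedBall_self b.rIn_pos.le)]
    exact one_ne_zero

theorem lambdaPQ_self_ball_pos [Nontrivial (EuclideanSpace ℝ (Fin N))] (hp : 1 ≤ p) (hr : 0 < r) :
    0 < lambdaPQ p p (ball c r) := by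
  have hp0 : 0 < p := one_pos.trans_le hp
  obtain ⟨a, ha⟩ := exists_norm_eq (EuclideanSpace ℝ (Fin N)) (by positivity : 0 ≤ 2 * r)
  have hC : 0 < ((2 * r) ^ p)⁻¹ := by positivity
  refine hC.trans_le (le_csInf (lambdaPQ_ball_set_nonempty p p c hr) ?_)
  rintro _ ⟨v, hv, hvc, hvr, ⟨x, -, hvx⟩, rfl⟩
  replace hv : ContDiff ℝ 1 v := hv.of_le (by exact_mod_cast le_top)
  have hpoincare := lintegral_rpow_le_of_translate_eq_zero volume hp hv (a := a) fun x hx ↦ by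
    have hxr := hvr (subset_tsupport v hx)
    refine image_eq_zero_of_notMem_tsupport fun h ↦ ?_
    have := dist_triangle_right (x + a) x c
    rw [dist_self_add_left, ha] at this
    linarith [mem_ball.1 (hvr h), mem_ball.1 hxr]
  rw [← ofReal_norm, ha, ENNReal.ofReal_rpow_of_pos (by positivity)] at hpoincare
  rw [← not_lt, rayleighQuot_self_lt_iff hp0 hv hvc hvr (ne_of_apply_ne (· x) hvx), not_lt,
    ENNReal.ofReal_inv_of_pos (by positivity), ENNReal.inv_mul_le_iff
      (ENNReal.ofReal_pos.2 (by positivity)).ne' ENNReal.ofReal_ne_top]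
  exact hpoincare

theorem exists_isRadialProfile_of_lambdaPQ_lt [Nontrivial (EuclideanSpace ℝ (Fin N))] {R : ℝ}
    (hp : 0 < p) (hr : 0 < r) (hR : 0 < R) (hq : lambdaPQ p p (ball c r) < q) :
    ∃ F, IsRadialProfile (N - 1) p (ENNReal.ofReal ((r / R) ^ p * q)) R F := by
  obtain ⟨_, ⟨v, hv, hvc, hvr, ⟨x, -, hvx⟩, rfl⟩, hvq⟩ :=
    exists_lt_of_csInf_lt (lambdaPQ_ball_set_nonempty p p c hr) hq
  replace hv : ContDiff ℝ 1 v := hv.of_le (by exact_mod_cast le_top)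
  have hlt := (rayleighQuot_self_lt_iff hp hv hvc hvr (ne_of_apply_ne (· x) hvx)).1 hvq
  obtain ⟨F, hF⟩ :=
    exists_isRadialProfile volume hp ((rayleighQuot_nonneg p).trans hvq.le) hv hvc hr hvr hlt
  refine ⟨fun t ↦ F (r / R * t), ?_⟩
  simpa [ENNReal.ofReal_mul (by positivity : 0 ≤ (r / R) ^ p), div_div_cancel₀ hr.ne'] using
    hF.comp_mul_left hp.le (div_pos hr hR)

end DirichletEigenvalue

/-- The positively homogeneous convex function `y ↦ (‖y‖ + ⟪e, y⟫) / 2`. For a unit vector `e` it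
lies between `⟪e, ·⟫` and the norm, and its gradient has length `√(tiltedNorm e y / ‖y‖)`, which
is less than `1` off the ray spanned by `e`. -/
noncomputable def tiltedNorm {E : Type*} [NormedAddCommGroup E] [InnerProductSpace ℝ E] (e y : E) :
    ℝ :=
  (‖y‖ + ⟪e, y⟫_ℝ) / 2

namespace tiltedNorm

variable {E : Type*} [NormedAddCommGroup E] [InnerProductSpace ℝ E] {e : E}

theorem smul_of_nonneg (e y : E) {t : ℝ} (ht : 0 ≤ t) :
    tiltedNorm e (t • y) = t * tiltedNorm e y := by
  rw [tiltedNorm, tiltedNorm, norm_smul, norm_of_nonneg ht, inner_smul_right]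
  ring

theorem inner_le (he : ‖e‖ = 1) (y : E) : ⟪e, y⟫_ℝ ≤ tiltedNorm e y := by
  have := real_inner_le_norm e y
  rw [he, one_mul] at this
  rw [tiltedNorm]
  linarith

theorem half_norm_le {y : E} (hy : 0 ≤ ⟪e, y⟫_ℝ) : ‖y‖ / 2 ≤ tiltedNorm e y := by
  rw [tiltedNorm]
  linarith

theorem le_norm (he : ‖e‖ = 1) (y : E) : tiltedNorm e y ≤ ‖y‖ := by
  have := real_inner_le_norm e y
  rw [he, one_mul] at this
  rw [tiltedNorm]
  linarith

theorem nonneg (he : ‖e‖ = 1) (y : E) : 0 ≤ tiltedNorm e y := by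
  have := neg_le_of_abs_le (abs_real_inner_le_norm e y)
  rw [he, one_mul] at this
  rw [tiltedNorm]
  linarith

theorem lipschitzWith (he : ‖e‖ = 1) : LipschitzWith 1 (tiltedNorm e) := by
  refine .of_le_add_mul 1 fun x y ↦ ?_
  have hnorm := norm_sub_norm_le x y
  have hinner := real_inner_le_norm e (x - y)
  rw [inner_sub_right, he, one_mul] at hinner
  rw [tiltedNorm, tiltedNorm, NNReal.coe_one, one_mul, dist_eq_norm]
  linarith

theorem hasFDerivAt {y : E} (hy : y ≠ 0) :
    HasFDerivAt (tiltedNorm e) (innerSL ℝ ((2 : ℝ)⁻¹ • (‖y‖⁻¹ • y + e))) y := by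
  have hsq : HasFDerivAt (fun y : E ↦ √(‖y‖ ^ 2)) _ y :=
    (hasStrictFDerivAt_norm_sq y).hasFDerivAt.sqrt (by positivity)
  simp only [sqrt_sq (norm_nonneg _)] at hsq
  have := (hsq.add (innerSL ℝ e).hasFDerivAt).mul_const (2 : ℝ)⁻¹
  refine this.congr_fderiv ?_
  ext z
  simp only [two_nsmul, FunLike.coe_smul, add_apply, Pi.smul_apply, innerSL_apply_apply,
    inner_add_left, real_inner_smul_left, smul_eq_mul]
  field_simp
  ring

theorem norm_fderiv_sq (he : ‖e‖ = 1) {y : E} (hy : y ≠ 0) :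
    ‖fderiv ℝ (tiltedNorm e) y‖ ^ 2 = tiltedNorm e y / ‖y‖ := by
  have hy' : ‖y‖ ≠ 0 := norm_ne_zero_iff.2 hy
  rw [(hasFDerivAt hy).fderiv, innerSL_apply_norm, norm_smul, mul_pow, norm_add_sq_real, norm_smul,
    norm_inv, norm_inv, norm_norm, inv_mul_cancel₀ hy', he, real_inner_smul_left, real_inner_comm,
    tiltedNorm]
  norm_num
  field_simp
  ring

theorem enorm_fderiv_comp_sub {F : ℝ → ℝ} {θ : E} (he : ‖e‖ = 1) (hθ : ‖θ‖ = 1) (x₀ : E) {t p : ℝ}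
    (ht : 0 < t) (hp : 0 ≤ p) (hF : DifferentiableAt ℝ F (tiltedNorm e θ * t)) :
    ‖fderiv ℝ (fun x ↦ F (tiltedNorm e (x - x₀))) (x₀ + t • θ)‖ₑ ^ p =
      ENNReal.ofReal (tiltedNorm e θ ^ (p / 2)) * ‖deriv F (tiltedNorm e θ * t)‖ₑ ^ p := by
  have hθ0 : t • θ ≠ 0 := smul_ne_zero ht.ne' (norm_ne_zero_iff.1 (by simp [hθ]))
  have hsub : x₀ + t • θ - x₀ = t • θ := add_sub_cancel_left _ _
  have hh : tiltedNorm e (t • θ) = tiltedNorm e θ * t := by rw [smul_of_nonneg e θ ht.le, mul_comm]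
  have hcomp : fderiv ℝ (fun x ↦ F (tiltedNorm e (x - x₀))) (x₀ + t • θ) =
      deriv F (tiltedNorm e θ * t) • fderiv ℝ (tiltedNorm e) (t • θ) := by
    rw [← hh, fderiv_comp_sub (f := fun y ↦ F (tiltedNorm e y)), hsub]
    exact ((hh ▸ hF.hasDerivAt).comp_hasFDerivAt _
      (hasFDerivAt hθ0).differentiableAt.hasFDerivAt).fderiv
  have hgrad : ‖fderiv ℝ (tiltedNorm e) (t • θ)‖ = tiltedNorm e θ ^ (1 / 2 : ℝ) := by
    rw [← sqrt_eq_rpow, eq_comm, sqrt_eq_iff_eq_sq (nonneg he θ) (norm_nonneg _),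
      norm_fderiv_sq he hθ0, hh, norm_smul, norm_of_nonneg ht.le, hθ]
    field_simp
  rw [hcomp, enorm_smul, ENNReal.mul_rpow_of_nonneg _ _ hp, ← ofReal_norm (fderiv _ _ _), hgrad,
    ENNReal.ofReal_rpow_of_nonneg (rpow_nonneg (nonneg he θ) _) hp, ← rpow_mul (nonneg he θ),
    one_div_mul_eq_div, mul_comm]

end tiltedNorm

/-- Every value of `D` on `Θ` is at least its average divided by `C`, so that `Θ` carries a definite
share of the integral. -/
theorem lintegral_mul_le_of_doubling {α : Type*} [MeasurableSpace α] {σ : Measure α}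
    {Θ : Set α} (hΘ : MeasurableSet Θ) {b D : α → ℝ≥0∞} {β C : ℝ≥0∞} (hβ : β ≤ 1)
    (hb : ∀ θ, b θ ≤ 1) (hbΘ : ∀ θ ∈ Θ, b θ ≤ β) (hD : ∀ θ, ∀ θ' ∈ Θ, D θ ≤ C * D θ')
    (hfin : ∫⁻ θ, D θ ∂σ ≠ ∞) :
    ∫⁻ θ, b θ * D θ ∂σ ≤ (1 - (1 - β) * σ Θ / (C * σ univ)) * ∫⁻ θ, D θ ∂σ := by
  set κ := (1 - β) * σ Θ / (C * σ univ)
  set δ := (∫⁻ θ, D θ ∂σ) / (C * σ univ)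
  have hδ (θ' : α) (hθ' : θ' ∈ Θ) : δ ≤ D θ' := by
    refine ENNReal.div_le_of_le_mul' ?_
    calc ∫⁻ θ, D θ ∂σ ≤ ∫⁻ _, C * D θ' ∂σ := lintegral_mono fun θ ↦ hD θ θ' hθ'
      _ = C * σ univ * D θ' := by rw [lintegral_const, mul_right_comm]
  have hpoint (θ : α) : b θ * D θ + Θ.indicator (fun _ ↦ (1 - β) * δ) θ ≤ D θ := by
    by_cases hθ : θ ∈ Θ
    · calc b θ * D θ + Θ.indicator (fun _ ↦ (1 - β) * δ) θ
          ≤ β * D θ + (1 - β) * D θ := by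
            rw [indicator_of_mem hθ]
            gcongr
            exacts [hbΘ θ hθ, hδ θ hθ]
        _ = D θ := by rw [← add_mul, add_tsub_cancel_of_le hβ, one_mul]
    · simpa [hθ] using mul_le_of_le_one_left' (hb θ)
  have hsum : ∫⁻ θ, b θ * D θ ∂σ + κ * ∫⁻ θ, D θ ∂σ ≤ ∫⁻ θ, D θ ∂σ :=
    calc ∫⁻ θ, b θ * D θ ∂σ + κ * ∫⁻ θ, D θ ∂σ
        = ∫⁻ θ, b θ * D θ + Θ.indicator (fun _ ↦ (1 - β) * δ) θ ∂σ := by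
          rw [lintegral_add_right _ (measurable_const.indicator hΘ), lintegral_indicator_const hΘ]
          simp only [κ, δ, div_eq_mul_inv]
          ring
      _ ≤ ∫⁻ θ, D θ ∂σ := lintegral_mono hpoint
  rw [ENNReal.sub_mul fun _ _ ↦ hfin, one_mul]
  exact ENNReal.le_sub_of_add_le_right (ne_top_of_le_ne_top hfin (le_of_add_le_right hsum)) hsum

theorem radialMeasure.setLIntegral_Ioo_comp_mul_le {n : ℕ} {w : ℝ → ℝ≥0∞} (hw : Antitone w)
    {a a' ρ ρ' m : ℝ} (hm : 0 < m) (ha : a' ≤ m * a) (hρ : ρ ≤ m * ρ') :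
    ∫⁻ t in Ioo 0 ρ, w (a * t) ∂radialMeasure n ≤
      ENNReal.ofReal (m ^ (n + 1)) * ∫⁻ t in Ioo 0 ρ', w (a' * t) ∂radialMeasure n :=
  calc ∫⁻ t in Ioo 0 ρ, w (a * t) ∂radialMeasure n
      ≤ ∫⁻ t in Ioo 0 (m * ρ'), w (a * t) ∂radialMeasure n :=
        lintegral_mono_set (Ioo_subset_Ioo_right hρ)
    _ = ENNReal.ofReal (m ^ (n + 1)) * ∫⁻ t in Ioo 0 ρ', w (a * (m * t)) ∂radialMeasure n :=
        setLIntegral_Ioo_mul_left hm _ _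
    _ ≤ ENNReal.ofReal (m ^ (n + 1)) * ∫⁻ t in Ioo 0 ρ', w (a' * t) ∂radialMeasure n := by
        gcongr 1
        refine setLIntegral_mono' measurableSet_Ioo fun t ht ↦ hw ?_
        rw [← mul_assoc, mul_comm a]
        gcongr
        exact ht.1.le

/-- The length of the part of the ray from `x₀` in the direction `θ` that runs inside `Ω`. It is
meant for convex `Ω` with `x₀ ∈ closure Ω`, and is nonpositive if the ray misses `Ω`. -/
noncomputable def rayLength {E : Type*} [NormedAddCommGroup E] [NormedSpace ℝ E] (Ω : Set E)
    (x₀ θ : E) : ℝ :=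
  sSup {t | x₀ + t • θ ∈ Ω}

section RayLength

variable {E : Type*} [NormedAddCommGroup E] [NormedSpace ℝ E] {Ω : Set E} {x₀ θ : E} {d t : ℝ}

theorem le_of_add_smul_mem (hd : ∀ x ∈ Ω, dist x x₀ ≤ d) (hθ : ‖θ‖ = 1) (ht : x₀ + t • θ ∈ Ω) :
    t ≤ d := by
  have := hd _ ht
  rw [dist_self_add_left, norm_smul, hθ, mul_one] at this
  exact (le_abs_self t).trans this

theorem rayLength_le (hd : ∀ x ∈ Ω, dist x x₀ ≤ d) (hd0 : 0 ≤ d) (hθ : ‖θ‖ = 1) :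
    rayLength Ω x₀ θ ≤ d :=
  Real.sSup_le (fun _ ↦ le_of_add_smul_mem hd hθ) hd0

theorem le_rayLength (hd : ∀ x ∈ Ω, dist x x₀ ≤ d) (hθ : ‖θ‖ = 1) (ht : x₀ + t • θ ∈ Ω) :
    t ≤ rayLength Ω x₀ θ :=
  le_csSup ⟨d, fun _ ↦ le_of_add_smul_mem hd hθ⟩ ht

theorem add_smul_mem_of_le (hΩo : IsOpen Ω) (hΩc : Convex ℝ Ω) (hx₀ : x₀ ∈ closure Ω) {s : ℝ}
    (hs : 0 < s) (hst : s ≤ t) (ht : x₀ + t • θ ∈ Ω) : x₀ + s • θ ∈ Ω := by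
  have ht0 : 0 < t := hs.trans_le hst
  have := hΩc.combo_closure_interior_mem_interior hx₀ (hΩo.interior_eq.symm ▸ ht)
    (a := 1 - s / t) (sub_nonneg.2 ((div_le_one ht0).2 hst)) (div_pos hs ht0) (sub_add_cancel _ _)
  rw [hΩo.interior_eq, smul_add, ← add_assoc, ← add_smul, sub_add_cancel, one_smul, smul_smul,
    div_mul_cancel₀ s ht0.ne'] at this
  exact this

theorem Ioo_subset_setOf_add_smul_mem (hΩo : IsOpen Ω) (hΩc : Convex ℝ Ω) (hx₀ : x₀ ∈ closure Ω) :
    Ioo 0 (rayLength Ω x₀ θ) ⊆ {t : ℝ | x₀ + t • θ ∈ Ω} := by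
  rintro s ⟨hs, hsρ⟩
  have hne : {t : ℝ | x₀ + t • θ ∈ Ω}.Nonempty := by
    by_contra! hempty
    rw [rayLength, hempty, Real.sSup_empty] at hsρ
    exact hs.not_gt hsρ
  obtain ⟨t, ht, hst⟩ := exists_lt_of_lt_csSup hne hsρ
  exact add_smul_mem_of_le hΩo hΩc hx₀ hs hst.le ht

theorem radialMeasure.restrict_setOf_add_smul_mem (n : ℕ) (hΩo : IsOpen Ω) (hΩc : Convex ℝ Ω)
    (hx₀ : x₀ ∈ closure Ω) (hd : ∀ x ∈ Ω, dist x x₀ ≤ d) (hθ : ‖θ‖ = 1) :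
    (radialMeasure n).restrict {t : ℝ | x₀ + t • θ ∈ Ω} =
      (radialMeasure n).restrict (Ioo 0 (rayLength Ω x₀ θ)) := by
  have hmeas : MeasurableSet {t : ℝ | x₀ + t • θ ∈ Ω} :=
    (hΩo.preimage (by fun_prop)).measurableSet
  refine le_antisymm ?_ (Measure.restrict_mono (Ioo_subset_setOf_add_smul_mem hΩo hΩc hx₀) le_rfl)
  have hsub : {t : ℝ | x₀ + t • θ ∈ Ω} ∩ Ioi 0 ⊆ Ioc 0 (rayLength Ω x₀ θ) :=
    fun t ht ↦ ⟨ht.2, le_rayLength hd hθ ht.1⟩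
  calc (radialMeasure n).restrict {t : ℝ | x₀ + t • θ ∈ Ω}
      = (radialMeasure n).restrict ({t : ℝ | x₀ + t • θ ∈ Ω} ∩ Ioi 0) := by
        rw [← Measure.restrict_restrict hmeas, restrict_Ioi]
    _ ≤ (radialMeasure n).restrict (Ioc 0 (rayLength Ω x₀ θ)) :=
        Measure.restrict_mono hsub le_rfl
    _ = (radialMeasure n).restrict (Ioo 0 (rayLength Ω x₀ θ)) :=
        restrict_Ioo_eq_restrict_Ioc.symm

end RayLength

theorem tiltedNorm.exists_mem_lt_norm {E : Type*} [NormedAddCommGroup E] [InnerProductSpace ℝ E]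
    (hE : 1 < Module.finrank ℝ E) {e : E} (he : ‖e‖ = 1) {Ω : Set E} (hΩo : IsOpen Ω)
    (hΩne : Ω.Nonempty) (x₀ : E) : ∃ z ∈ Ω, tiltedNorm e (z - x₀) < ‖z - x₀‖ := by
  by_contra! hle
  have hline : (x₀ + ·) ⁻¹' Ω ⊆ Submodule.span ℝ {e} := fun y hy ↦ by
    have hy' := hle _ hy
    rw [add_sub_cancel_left, tiltedNorm] at hy'
    have heq : ⟪e, y⟫_ℝ = ‖e‖ * ‖y‖ :=
      (real_inner_le_norm e y).antisymm (by rw [he, one_mul]; linarith)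
    rw [inner_eq_norm_mul_iff_real, he, one_smul] at heq
    exact Submodule.mem_span_singleton.2 ⟨‖y‖, heq⟩
  have hint : (interior (Submodule.span ℝ {e} : Set E)).Nonempty := by
    obtain ⟨z, hz⟩ := hΩne
    refine ⟨z - x₀, interior_maximal hline (hΩo.preimage (by fun_prop)) ?_⟩
    simpa using hz
  have htop := Submodule.eq_top_of_nonempty_interior' _ hint
  rw [← finrank_top, ← htop, finrank_span_singleton (norm_ne_zero_iff.1 (by simp [he]))] at hE
  exact lt_irrefl 1 hE

section Contraction

variable {E : Type*} [NormedAddCommGroup E] [InnerProductSpace ℝ E] {Ω : Set E} {e x₀ : E}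

/-- The `p`-mass of `x ↦ F (tiltedNorm e (x - x₀))` along the part of the ray from `x₀` in the
direction `θ` that runs inside `Ω`, with the weight of polar coordinates in dimension `n + 1`. -/
noncomputable def rayMass (n : ℕ) (p : ℝ) (Ω : Set E) (e x₀ : E) (F : ℝ → ℝ) (θ : E) : ℝ≥0∞ :=
  ∫⁻ t in Ioo 0 (rayLength Ω x₀ θ), ‖F (tiltedNorm e θ * t)‖ₑ ^ p ∂radialMeasure n

theorem rayMass_eq_zero {n : ℕ} {p : ℝ} {F : ℝ → ℝ} {θ : E} (hρ : rayLength Ω x₀ θ ≤ 0) :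
    rayMass n p Ω e x₀ F θ = 0 := by
  rw [rayMass, Ioo_eq_empty_of_le hρ, setLIntegral_empty]

theorem half_le_tiltedNorm_of_rayLength_pos (hΩo : IsOpen Ω) (hΩc : Convex ℝ Ω)
    (hx₀ : x₀ ∈ closure Ω) (hΩe : ∀ x ∈ Ω, 0 ≤ ⟪e, x - x₀⟫_ℝ) {θ : E} (hθ : ‖θ‖ = 1)
    (hρ : 0 < rayLength Ω x₀ θ) : 1 / 2 ≤ tiltedNorm e θ := by
  have hmid := hΩe _ (Ioo_subset_setOf_add_smul_mem hΩo hΩc hx₀ ⟨half_pos hρ, half_lt_self hρ⟩)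
  rw [add_sub_cancel_left, inner_smul_right, mul_nonneg_iff_of_pos_left (half_pos hρ)] at hmid
  exact hθ ▸ tiltedNorm.half_norm_le hmid

theorem IsRadialProfile.setLIntegral_ray_fderiv_le {n : ℕ} {p r : ℝ} {Q : ℝ≥0∞} {F : ℝ → ℝ}
    (hF : IsRadialProfile n p Q r F) (hp : 0 ≤ p) (he : ‖e‖ = 1) (hΩo : IsOpen Ω)
    (hΩc : Convex ℝ Ω) (hx₀ : x₀ ∈ closure Ω) (hΩe : ∀ x ∈ Ω, 0 ≤ ⟪e, x - x₀⟫_ℝ) {θ : E}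
    (hθ : ‖θ‖ = 1) :
    ∫⁻ t in Ioo 0 (rayLength Ω x₀ θ),
        ‖fderiv ℝ (fun x ↦ F (tiltedNorm e (x - x₀))) (x₀ + t • θ)‖ₑ ^ p ∂radialMeasure n ≤
      Q * (ENNReal.ofReal (tiltedNorm e θ ^ (p / 2)) * rayMass n p Ω e x₀ F θ) := by
  rcases le_or_gt (rayLength Ω x₀ θ) 0 with hρ | hρ
  · simp [Ioo_eq_empty_of_le hρ]
  have hθe : 0 < tiltedNorm e θ := one_half_pos.trans_le
    (half_le_tiltedNorm_of_rayLength_pos hΩo hΩc hx₀ hΩe hθ hρ)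
  obtain ⟨K, hK⟩ := hF.exists_lipschitzWith
  have hdiff : ∀ᵐ t, DifferentiableAt ℝ F (tiltedNorm e θ * t) :=
    (Measure.quasiMeasurePreserving_smul volume hθe.ne').ae hK.ae_differentiableAt_real
  calc ∫⁻ t in Ioo 0 (rayLength Ω x₀ θ),
        ‖fderiv ℝ (fun x ↦ F (tiltedNorm e (x - x₀))) (x₀ + t • θ)‖ₑ ^ p ∂radialMeasure n
      = ∫⁻ t in Ioo 0 (rayLength Ω x₀ θ), ENNReal.ofReal (tiltedNorm e θ ^ (p / 2)) *
          ‖deriv F (tiltedNorm e θ * t)‖ₑ ^ p ∂radialMeasure n := by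
        refine setLIntegral_congr_fun_ae measurableSet_Ioo ?_
        filter_upwards [radialMeasure.absolutelyContinuous.ae_le hdiff] with t ht htρ
        exact tiltedNorm.enorm_fderiv_comp_sub he hθ x₀ htρ.1 hp ht
    _ ≤ Q * (ENNReal.ofReal (tiltedNorm e θ ^ (p / 2)) * rayMass n p Ω e x₀ F θ) := by
        rw [lintegral_const_mul' _ _ ENNReal.ofReal_ne_top, mul_left_comm]
        gcongr
        exact hF.energy_comp_mul_left_le hθe _

theorem tiltedNorm.exists_cone (hE : 1 < Module.finrank ℝ E) (he : ‖e‖ = 1) (hΩo : IsOpen Ω)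
    (hΩne : Ω.Nonempty) (x₀ : E) :
    ∃ s > (0 : ℝ), ∃ β ∈ Ioo (0 : ℝ) 1, ∃ Θ : Set (sphere (0 : E) 1), IsOpen Θ ∧ Θ.Nonempty ∧
      ∀ θ ∈ Θ, x₀ + s • θ.1 ∈ Ω ∧ tiltedNorm e θ ≤ β := by
  obtain ⟨z, hz, hzlt⟩ := exists_mem_lt_norm hE he hΩo hΩne x₀
  have hs : 0 < ‖z - x₀‖ := (nonneg he _).trans_lt hzlt
  set θ₀ : E := ‖z - x₀‖⁻¹ • (z - x₀)
  have hθ₀ : ‖z - x₀‖ • θ₀ = z - x₀ := smul_inv_smul₀ hs.ne' _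
  have hlt : tiltedNorm e θ₀ < 1 := by
    rwa [← hθ₀, smul_of_nonneg e θ₀ hs.le, hθ₀, mul_lt_iff_lt_one_right hs] at hzlt
  obtain ⟨β, hβ, hβ1⟩ := exists_between hlt
  refine ⟨‖z - x₀‖, hs, β, ⟨(nonneg he θ₀).trans_lt hβ, hβ1⟩,
    {θ | x₀ + ‖z - x₀‖ • θ.1 ∈ Ω} ∩ {θ | tiltedNorm e θ.1 < β},
    (hΩo.preimage (by fun_prop)).inter ?_,
    ⟨⟨θ₀, ?_⟩, ?_, hβ⟩, fun θ hθ ↦ ⟨hθ.1, hθ.2.le⟩⟩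
  · exact isOpen_lt ((lipschitzWith he).continuous.comp continuous_subtype_val) continuous_const
  · rw [mem_sphere_zero_iff_norm, norm_smul, norm_inv, norm_norm, inv_mul_cancel₀ hs.ne']
  · simpa [hθ₀] using hz

theorem IsRadialProfile.rayMass_le {n : ℕ} {p r : ℝ} {Q : ℝ≥0∞} {F : ℝ → ℝ}
    (hF : IsRadialProfile n p Q r F) (hp : 0 ≤ p) (he : ‖e‖ = 1) (hΩo : IsOpen Ω)
    (hΩc : Convex ℝ Ω) (hx₀ : x₀ ∈ closure Ω) (hΩe : ∀ x ∈ Ω, 0 ≤ ⟪e, x - x₀⟫_ℝ) {d s : ℝ}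
    (hd : ∀ x ∈ Ω, dist x x₀ ≤ d) (hs : 0 < s) {θ θ' : E} (hθ : ‖θ‖ = 1)
    (hθ' : ‖θ'‖ = 1) (hsθ' : x₀ + s • θ' ∈ Ω) :
    rayMass n p Ω e x₀ F θ ≤
      ENNReal.ofReal (max 2 (d / s) ^ (n + 1)) * rayMass n p Ω e x₀ F θ' := by
  rcases le_or_gt (rayLength Ω x₀ θ) 0 with hρ | hρ
  · simp [rayMass_eq_zero hρ]
  have hm : 0 < max 2 (d / s) := two_pos.trans_le (le_max_left _ _)
  refine radialMeasure.setLIntegral_Ioo_comp_mul_le (hF.antitone_enorm_rpow hp) hm ?_ ?_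
  · calc tiltedNorm e θ' ≤ 2 * (1 / 2) := by simpa [hθ'] using tiltedNorm.le_norm he θ'
      _ ≤ max 2 (d / s) * tiltedNorm e θ := by
        gcongr
        exacts [le_max_left _ _, half_le_tiltedNorm_of_rayLength_pos hΩo hΩc hx₀ hΩe hθ hρ]
  · calc rayLength Ω x₀ θ ≤ d / s * s := by
          rw [div_mul_cancel₀ d hs.ne']
          exact rayLength_le hd (dist_nonneg.trans (hd _ hsθ')) hθ
      _ ≤ max 2 (d / s) * rayLength Ω x₀ θ' := by
        gcongr
        exacts [le_max_right _ _, le_rayLength hd hθ' hsθ']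

variable [MeasurableSpace E] [BorelSpace E] [FiniteDimensional ℝ E]
  (μ : Measure E) [μ.IsAddHaarMeasure]

theorem setLIntegral_eq_lintegral_toSphere_rayLength [Nontrivial E] (hΩo : IsOpen Ω)
    (hΩc : Convex ℝ Ω) (hx₀ : x₀ ∈ closure Ω) {d : ℝ} (hd : ∀ x ∈ Ω, dist x x₀ ≤ d)
    {g : E → ℝ≥0∞} (hg : Measurable g) :
    ∫⁻ x in Ω, g x ∂μ = ∫⁻ θ, ∫⁻ t in Ioo 0 (rayLength Ω x₀ θ.1), g (x₀ + t • θ.1)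
      ∂radialMeasure (Module.finrank ℝ E - 1) ∂μ.toSphere := by
  rw [setLIntegral_eq_lintegral_toSphere_radialMeasure μ hΩo.measurableSet hg x₀]
  refine lintegral_congr fun θ ↦ ?_
  rw [radialMeasure.restrict_setOf_add_smul_mem _ hΩo hΩc hx₀ hd (norm_eq_of_mem_sphere θ)]

theorem setLIntegral_comp_tiltedNorm_eq_lintegral_rayMass [Nontrivial E] (he : ‖e‖ = 1)
    (hΩo : IsOpen Ω) (hΩc : Convex ℝ Ω) (hx₀ : x₀ ∈ closure Ω) {d : ℝ}
    (hd : ∀ x ∈ Ω, dist x x₀ ≤ d) {F : ℝ → ℝ} (hF : Measurable F) (p : ℝ) :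
    ∫⁻ x in Ω, ‖F (tiltedNorm e (x - x₀))‖ₑ ^ p ∂μ =
      ∫⁻ θ, rayMass (Module.finrank ℝ E - 1) p Ω e x₀ F θ.1 ∂μ.toSphere := by
  have hmeas : Measurable fun x ↦ F (tiltedNorm e (x - x₀)) :=
    hF.comp ((tiltedNorm.lipschitzWith he).continuous.measurable.comp (measurable_sub_const x₀))
  rw [setLIntegral_eq_lintegral_toSphere_rayLength μ hΩo hΩc hx₀ hd (hmeas.enorm.pow_const p)]
  refine lintegral_congr fun θ ↦ setLIntegral_congr_fun measurableSet_Ioo fun t ht ↦ ?_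
  simp only [add_sub_cancel_left, tiltedNorm.smul_of_nonneg e _ ht.1.le, mul_comm]

theorem IsRadialProfile.setLIntegral_fderiv_comp_tiltedNorm_le [Nontrivial E] {p r : ℝ} {Q : ℝ≥0∞}
    (hQ : Q ≠ ∞) {F : ℝ → ℝ} (hF : IsRadialProfile (Module.finrank ℝ E - 1) p Q r F) (hp : 0 ≤ p)
    (he : ‖e‖ = 1) (hΩo : IsOpen Ω) (hΩc : Convex ℝ Ω) (hx₀ : x₀ ∈ closure Ω) {d : ℝ}
    (hd : ∀ x ∈ Ω, dist x x₀ ≤ d) (hΩe : ∀ x ∈ Ω, 0 ≤ ⟪e, x - x₀⟫_ℝ) :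
    ∫⁻ x in Ω, ‖fderiv ℝ (fun x ↦ F (tiltedNorm e (x - x₀))) x‖ₑ ^ p ∂μ ≤
      Q * ∫⁻ θ, ENNReal.ofReal (tiltedNorm e θ.1 ^ (p / 2)) *
        rayMass (Module.finrank ℝ E - 1) p Ω e x₀ F θ.1 ∂μ.toSphere := by
  rw [setLIntegral_eq_lintegral_toSphere_rayLength μ hΩo hΩc hx₀ hd
    ((measurable_fderiv ℝ _).enorm.pow_const p), ← lintegral_const_mul' _ _ hQ]
  exact lintegral_mono fun θ ↦
    hF.setLIntegral_ray_fderiv_le hp he hΩo hΩc hx₀ hΩe (norm_eq_of_mem_sphere θ)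

theorem exists_lt_one_forall_setLIntegral_fderiv_le (hE : 1 < Module.finrank ℝ E) {p : ℝ}
    (hp : 0 < p) (he : ‖e‖ = 1) (hΩo : IsOpen Ω) (hΩb : Bornology.IsBounded Ω)
    (hΩc : Convex ℝ Ω) (hx₀ : x₀ ∈ closure Ω) (hΩe : ∀ x ∈ Ω, 0 ≤ ⟪e, x - x₀⟫_ℝ) :
    ∃ c < (1 : ℝ≥0∞), ∀ Q ≠ ∞, ∀ r F, IsRadialProfile (Module.finrank ℝ E - 1) p Q r F →
      ∫⁻ x in Ω, ‖fderiv ℝ (fun x ↦ F (tiltedNorm e (x - x₀))) x‖ₑ ^ p ∂μ ≤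
        c * (Q * ∫⁻ x in Ω, ‖F (tiltedNorm e (x - x₀))‖ₑ ^ p ∂μ) := by
  have := Module.nontrivial_of_finrank_pos (one_pos.trans hE)
  obtain ⟨s, hs, β, ⟨hβ0, hβ1⟩, Θ, hΘo, hΘne, hΘ⟩ :=
    tiltedNorm.exists_cone hE he hΩo (closure_nonempty_iff.1 ⟨x₀, hx₀⟩) x₀
  obtain ⟨d, hd⟩ := hΩb.subset_closedBall x₀
  set C := ENNReal.ofReal (max 2 (d / s) ^ (Module.finrank ℝ E - 1 + 1))
  have hβ : ENNReal.ofReal (β ^ (p / 2)) < 1 :=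
    ENNReal.ofReal_lt_one.2 (rpow_lt_one hβ0.le hβ1 (half_pos hp))
  refine ⟨1 - (1 - ENNReal.ofReal (β ^ (p / 2))) * μ.toSphere Θ / (C * μ.toSphere univ), ?_,
    fun Q hQ r F hF ↦ ?_⟩
  · refine ENNReal.sub_lt_self ENNReal.one_ne_top one_ne_zero (ENNReal.div_pos ?_ ?_).ne'
    · exact mul_ne_zero (tsub_pos_of_lt hβ).ne' (hΘo.measure_pos _ hΘne).ne'
    · finiteness
  obtain ⟨K, hK⟩ := hF.exists_lipschitzWith
  have hcont : Continuous fun x ↦ F (tiltedNorm e (x - x₀)) :=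
    hK.continuous.comp ((tiltedNorm.lipschitzWith he).continuous.comp (by fun_prop))
  have hmass := setLIntegral_comp_tiltedNorm_eq_lintegral_rayMass μ he hΩo hΩc hx₀ hd
    hK.continuous.measurable p
  have hfin := (setLIntegral_enorm_rpow_lt_top (μ := μ) hp.le hΩb hcont).ne
  refine (hF.setLIntegral_fderiv_comp_tiltedNorm_le μ hQ hp.le he hΩo hΩc hx₀ hd hΩe).trans ?_
  rw [mul_left_comm, hmass]
  gcongr
  refine lintegral_mul_le_of_doubling hΘo.measurableSet hβ.le (fun θ ↦ ?_) (fun θ hθ ↦ ?_)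
    (fun θ θ' hθ' ↦ ?_) (hmass ▸ hfin)
  · refine ENNReal.ofReal_le_one.2 (rpow_le_one (tiltedNorm.nonneg he _) ?_ (half_pos hp).le)
    exact (tiltedNorm.le_norm he _).trans_eq (norm_eq_of_mem_sphere θ)
  · exact ENNReal.ofReal_le_ofReal (rpow_le_rpow (tiltedNorm.nonneg he _) (hΘ θ hθ).2
      (half_pos hp).le)
  · exact hF.rayMass_le hp.le he hΩo hΩc hx₀ hΩe hd hs
      (norm_eq_of_mem_sphere θ) (norm_eq_of_mem_sphere θ') (hΘ θ' hθ').1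

end Contraction

section DisjointSupport

theorem notMem_or_notMem_of_disjoint {α : Type*} {s t : Set α} (h : Disjoint s t) (x : α) :
    x ∉ s ∨ x ∉ t :=
  not_and_or.1 fun hx ↦ disjoint_left.1 h hx.1 hx.2

theorem eq_zero_or_eq_zero_of_disjoint_tsupport {X F : Type*} [TopologicalSpace X] [Zero F]
    {u v : X → F} (huv : Disjoint (tsupport u) (tsupport v)) (x : X) : u x = 0 ∨ v x = 0 :=
  (notMem_or_notMem_of_disjoint huv x).imp image_eq_zero_of_notMem_tsupport
    image_eq_zero_of_notMem_tsupport

theorem enorm_sub_rpow_of_eq_zero_or_eq_zero {F : Type*} [NormedAddCommGroup F] {p : ℝ}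
    (hp : 0 < p) {a b : F} (h : a = 0 ∨ b = 0) : ‖a - b‖ₑ ^ p = ‖a‖ₑ ^ p + ‖b‖ₑ ^ p := by
  rcases h with rfl | rfl <;> simp [hp]

theorem abs_sub_rpow_mul_sub_of_eq_zero_or_eq_zero {p : ℝ} (hp : 1 < p) {a b : ℝ} (ha : 0 ≤ a)
    (hb : 0 ≤ b) (h : a = 0 ∨ b = 0) :
    |a - b| ^ (p - 2) * (a - b) = a ^ (p - 1) - b ^ (p - 1) := by
  have hp1 : p - 1 ≠ 0 := sub_ne_zero.2 hp.ne'
  have hpow {s : ℝ} (hs : 0 ≤ s) : s ^ (p - 2) * s = s ^ (p - 1) := by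
    have hexp : p - 2 + 1 = p - 1 := by ring
    rw [← rpow_add_one' hs (hexp ▸ hp1), hexp]
  rcases h with rfl | rfl
  · rw [zero_sub, abs_neg, abs_of_nonneg hb, mul_neg, hpow hb, zero_rpow hp1, zero_sub]
  · rw [sub_zero, abs_of_nonneg ha, hpow ha, zero_rpow hp1, sub_zero]

theorem fderiv_sub_of_disjoint_tsupport {E F : Type*} [NormedAddCommGroup E] [NormedSpace ℝ E]
    [NormedAddCommGroup F] [NormedSpace ℝ F] {u v : E → F}
    (huv : Disjoint (tsupport u) (tsupport v)) (x : E) :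
    fderiv ℝ (u - v) x = fderiv ℝ u x - fderiv ℝ v x := by
  rcases notMem_or_notMem_of_disjoint huv x with h | h
  · have : u - v =ᶠ[𝓝 x] -v := by
      simpa using (notMem_tsupport_iff_eventuallyEq.1 h).sub (.refl (𝓝 x) v)
    rw [this.fderiv_eq, fderiv_neg, fderiv_of_notMem_tsupport ℝ h, zero_sub]
  · have : u - v =ᶠ[𝓝 x] u := by
      simpa using (Filter.EventuallyEq.refl (𝓝 x) u).sub (notMem_tsupport_iff_eventuallyEq.1 h)
    rw [this.fderiv_eq, fderiv_of_notMem_tsupport ℝ h, sub_zero]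

theorem lintegral_enorm_sub_rpow_of_disjoint_tsupport {X F : Type*} [TopologicalSpace X]
    [MeasurableSpace X] [OpensMeasurableSpace X] [NormedAddCommGroup F] (μ : Measure X) {p : ℝ}
    (hp : 0 < p) {u v : X → F} (hu : Continuous u) (huv : Disjoint (tsupport u) (tsupport v)) :
    ∫⁻ x, ‖(u - v) x‖ₑ ^ p ∂μ = ∫⁻ x, ‖u x‖ₑ ^ p ∂μ + ∫⁻ x, ‖v x‖ₑ ^ p ∂μ := by
  rw [← lintegral_add_left (hu.enorm.measurable.pow_const p)]
  exact lintegral_congr fun x ↦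
    enorm_sub_rpow_of_eq_zero_or_eq_zero hp (eq_zero_or_eq_zero_of_disjoint_tsupport huv x)

theorem lintegral_enorm_fderiv_sub_rpow_of_disjoint_tsupport {E F : Type*} [NormedAddCommGroup E]
    [NormedSpace ℝ E] [MeasurableSpace E] [OpensMeasurableSpace E] [NormedAddCommGroup F]
    [NormedSpace ℝ F] [CompleteSpace F] (μ : Measure E) {p : ℝ} (hp : 0 < p) {u v : E → F}
    (huv : Disjoint (tsupport u) (tsupport v)) :
    ∫⁻ x, ‖fderiv ℝ (u - v) x‖ₑ ^ p ∂μ =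
      ∫⁻ x, ‖fderiv ℝ u x‖ₑ ^ p ∂μ + ∫⁻ x, ‖fderiv ℝ v x‖ₑ ^ p ∂μ := by
  rw [← lintegral_add_left ((measurable_fderiv ℝ u).enorm.pow_const p)]
  refine lintegral_congr fun x ↦ ?_
  rw [fderiv_sub_of_disjoint_tsupport huv]
  exact enorm_sub_rpow_of_eq_zero_or_eq_zero hp <| eq_zero_or_eq_zero_of_disjoint_tsupport
    (huv.mono (tsupport_fderiv_subset ℝ) (tsupport_fderiv_subset ℝ)) x

end DisjointSupport

section NeumannEigenvalue

variable {N : ℕ} {p a : ℝ} {Ω : Set (EuclideanSpace ℝ (Fin N))}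
  {u v : EuclideanSpace ℝ (Fin N) → ℝ}

theorem muPQ_self_le_of_lintegral_le (hp : 0 < p) (ha : 0 ≤ a) (hΩo : IsOpen Ω)
    (hΩb : Bornology.IsBounded Ω) {K : ℝ≥0} (hv : LipschitzWith K v) (hv0 : ∃ x ∈ Ω, v x ≠ 0)
    (hmean : ∫ x in Ω, |v x| ^ (p - 2) * v x = 0)
    (hle : ∫⁻ x in Ω, ‖fderiv ℝ v x‖ₑ ^ p ≤ ENNReal.ofReal a * ∫⁻ x in Ω, ‖v x‖ₑ ^ p) :
    muPQ p p Ω ≤ a := by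
  have hbdd : BddBelow {R : ℝ | ∃ v : EuclideanSpace ℝ (Fin N) → ℝ, ∃ K : NNReal,
      LipschitzOnWith K v (closure Ω) ∧ (∃ x ∈ Ω, v x ≠ 0) ∧
      (∫ x in Ω, |v x| ^ (p - 2) * v x) = 0 ∧ R = rayleighQuot p p Ω v} :=
    ⟨0, by rintro _ ⟨v, -, -, -, -, rfl⟩; exact rayleighQuot_nonneg p⟩
  refine (csInf_le hbdd ⟨v, K, hv.lipschitzOnWith, hv0, hmean, rfl⟩).trans ?_
  obtain ⟨x, hxΩ, hx⟩ := hv0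
  have hpos := setLIntegral_enorm_rpow_pos (μ := volume) hp hΩo hv.continuous hxΩ hx
  have hfin := setLIntegral_enorm_rpow_lt_top (μ := volume) hp.le hΩb hv.continuous
  rw [rayleighQuot_self_eq hp hv.continuous.aestronglyMeasurable,
    div_le_iff₀ (ENNReal.toReal_pos hpos.ne' hfin.ne)]
  simpa [ha] using ENNReal.toReal_mono (by finiteness) hle

theorem muPQ_self_le_of_disjoint_tsupport_of_integral_eq (hp : 1 < p) (ha : 0 ≤ a)
    (hΩo : IsOpen Ω) (hΩb : Bornology.IsBounded Ω) {K L : ℝ≥0} (hu : LipschitzWith K u)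
    (hv : LipschitzWith L v) (hu0 : 0 ≤ u) (hv0 : 0 ≤ v) (hune : ∃ x ∈ Ω, u x ≠ 0)
    (huv : Disjoint (tsupport u) (tsupport v))
    (hmean : ∫ x in Ω, u x ^ (p - 1) = ∫ x in Ω, v x ^ (p - 1))
    (hule : ∫⁻ x in Ω, ‖fderiv ℝ u x‖ₑ ^ p ≤ ENNReal.ofReal a * ∫⁻ x in Ω, ‖u x‖ₑ ^ p)
    (hvle : ∫⁻ x in Ω, ‖fderiv ℝ v x‖ₑ ^ p ≤ ENNReal.ofReal a * ∫⁻ x in Ω, ‖v x‖ₑ ^ p) :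
    muPQ p p Ω ≤ a := by
  have hp0 : 0 < p := one_pos.trans hp
  have hzero := eq_zero_or_eq_zero_of_disjoint_tsupport huv
  have hint {g : EuclideanSpace ℝ (Fin N) → ℝ} (hg : Continuous g) :
      IntegrableOn (fun x ↦ g x ^ (p - 1)) Ω :=
    ((hg.rpow_const fun _ ↦ .inr (sub_pos.2 hp).le).continuousOn.integrableOn_compact
      hΩb.isCompact_closure).mono_set subset_closure
  refine muPQ_self_le_of_lintegral_le (v := u - v) hp0 ha hΩo hΩb (hu.sub hv) ?_ ?_ ?_
  · obtain ⟨x, hxΩ, hx⟩ := hune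
    exact ⟨x, hxΩ, by simpa [(hzero x).resolve_left hx] using hx⟩
  · simp only [Pi.sub_apply,
      abs_sub_rpow_mul_sub_of_eq_zero_or_eq_zero hp (hu0 _) (hv0 _) (hzero _)]
    rw [integral_sub (hint hu.continuous) (hint hv.continuous), hmean, sub_self]
  · rw [lintegral_enorm_fderiv_sub_rpow_of_disjoint_tsupport _ hp0 huv,
      lintegral_enorm_sub_rpow_of_disjoint_tsupport _ hp0 hu.continuous huv, mul_add]
    exact add_le_add hule hvle

theorem lintegral_fderiv_const_smul_le {E : Type*} [NormedAddCommGroup E] [NormedSpace ℝ E]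
    [MeasurableSpace E] {μ : Measure E} {Q : ℝ≥0∞} (hp : 0 ≤ p) (b : ℝ) {u : E → ℝ}
    (hu : ∫⁻ x, ‖fderiv ℝ u x‖ₑ ^ p ∂μ ≤ Q * ∫⁻ x, ‖u x‖ₑ ^ p ∂μ) :
    ∫⁻ x, ‖fderiv ℝ (b • u) x‖ₑ ^ p ∂μ ≤ Q * ∫⁻ x, ‖(b • u) x‖ₑ ^ p ∂μ := by
  simp only [fderiv_const_smul_field, Pi.smul_apply, enorm_smul, ENNReal.mul_rpow_of_nonneg _ _ hp]
  rw [lintegral_const_mul' _ _ (by finiteness), lintegral_const_mul' _ _ (by finiteness),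
    mul_left_comm]
  gcongr

theorem muPQ_self_le_of_disjoint_tsupport (hp : 1 < p) (ha : 0 ≤ a) (hΩo : IsOpen Ω)
    (hΩb : Bornology.IsBounded Ω) {K L : ℝ≥0} (hu : LipschitzWith K u) (hv : LipschitzWith L v)
    (hu0 : 0 ≤ u) (hv0 : 0 ≤ v) (hune : ∃ x ∈ Ω, u x ≠ 0) (hvne : ∃ x ∈ Ω, v x ≠ 0)
    (huv : Disjoint (tsupport u) (tsupport v))
    (hule : ∫⁻ x in Ω, ‖fderiv ℝ u x‖ₑ ^ p ≤ ENNReal.ofReal a * ∫⁻ x in Ω, ‖u x‖ₑ ^ p)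
    (hvle : ∫⁻ x in Ω, ‖fderiv ℝ v x‖ₑ ^ p ≤ ENNReal.ofReal a * ∫⁻ x in Ω, ‖v x‖ₑ ^ p) :
    muPQ p p Ω ≤ a := by
  have hp1 : 0 < p - 1 := sub_pos.2 hp
  have hpos {g : EuclideanSpace ℝ (Fin N) → ℝ} (hg : Continuous g) (hg0 : 0 ≤ g)
      (hgne : ∃ x ∈ Ω, g x ≠ 0) : 0 < ∫ x in Ω, g x ^ (p - 1) := by
    obtain ⟨x, hxΩ, hx⟩ := hgne
    have hnorm := integral_norm_rpow_eq_toReal hp1.le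
      (hg.aestronglyMeasurable (μ := volume.restrict Ω))
    simp only [norm_of_nonneg (hg0 _)] at hnorm
    rw [hnorm]
    exact ENNReal.toReal_pos (setLIntegral_enorm_rpow_pos hp1 hΩo hg hxΩ hx).ne'
      (setLIntegral_enorm_rpow_lt_top hp1.le hΩb hg).ne
  have hI := hpos hu.continuous hu0 hune
  have hJ := hpos hv.continuous hv0 hvne
  set b : ℝ := ((∫ x in Ω, u x ^ (p - 1)) / ∫ x in Ω, v x ^ (p - 1)) ^ (p - 1)⁻¹ with hb
  have hb0 : 0 ≤ b := by positivity
  refine muPQ_self_le_of_disjoint_tsupport_of_integral_eq hp ha hΩo hΩb hu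
    ((lipschitzWith_smul b).comp hv) hu0 (fun x ↦ mul_nonneg hb0 (hv0 x)) hune
    (huv.mono_right (closure_mono (Function.support_const_smul_subset b v))) ?_ hule
    (lintegral_fderiv_const_smul_le (one_pos.trans hp).le b hvle)
  simp only [Function.comp_apply, smul_eq_mul, mul_rpow hb0 (hv0 _)]
  rw [integral_const_mul, hb, rpow_inv_rpow (by positivity) hp1.ne', div_mul_cancel₀ _ hJ.ne']

end NeumannEigenvalue

section Diameter

theorem exists_mem_closure_dist_eq_diam {X : Type*} [PseudoMetricSpace X] [ProperSpace X]
    {s : Set X} (hs : Bornology.IsBounded s) (hne : s.Nonempty) :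
    ∃ x ∈ closure s, ∃ y ∈ closure s, dist x y = diam s := by
  have hcomp := hs.isCompact_closure
  obtain ⟨⟨x, y⟩, ⟨hx, hy⟩, hmax⟩ := (hcomp.prod hcomp).exists_isMaxOn
    (hne.closure.prod hne.closure) continuous_dist.continuousOn
  refine ⟨x, hx, y, hy, (diam_closure (s := s) ▸ dist_le_diam_of_mem hs.closure hx hy).antisymm ?_⟩
  exact diam_le_of_forall_dist_le dist_nonneg fun a ha b hb ↦
    hmax (mk_mem_prod (subset_closure ha) (subset_closure hb))

variable {E : Type*} [NormedAddCommGroup E] [InnerProductSpace ℝ E]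

theorem inner_sub_nonneg_of_dist_le_dist {x y z : E} (h : dist z y ≤ dist x y) :
    0 ≤ ⟪y - x, z - x⟫_ℝ := by
  have hsq := norm_sub_sq_real (z - x) (y - x)
  rw [sub_sub_sub_cancel_right, ← dist_eq_norm, ← dist_eq_norm, ← dist_eq_norm, dist_comm y x,
    real_inner_comm] at hsq
  have : dist z y ^ 2 ≤ dist x y ^ 2 := by gcongr
  linarith [sq_nonneg (dist z x)]

theorem exists_unit_vector_along_diam [ProperSpace E] {Ω : Set E} (hΩ : Bornology.IsBounded Ω)
    (hΩn : Ω.Nontrivial) : ∃ e : E, ‖e‖ = 1 ∧ ∃ x ∈ closure Ω, ∃ y ∈ closure Ω,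
      y - x = diam Ω • e ∧ (∀ z ∈ Ω, 0 ≤ ⟪e, z - x⟫_ℝ) ∧ ∀ z ∈ Ω, 0 ≤ ⟪-e, z - y⟫_ℝ := by
  obtain ⟨x, hx, y, hy, hxy⟩ := exists_mem_closure_dist_eq_diam hΩ hΩn.nonempty
  have hd : 0 < diam Ω := diam_pos hΩn hΩ
  have hle {w : E} (hw : w ∈ closure Ω) {z : E} (hz : z ∈ Ω) : dist z w ≤ dist x y := by
    rw [hxy, ← diam_closure]
    exact dist_le_diam_of_mem hΩ.closure (subset_closure hz) hw
  refine ⟨(diam Ω)⁻¹ • (y - x), ?_, x, hx, y, hy, ?_, fun z hz ↦ ?_, fun z hz ↦ ?_⟩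
  · rw [norm_smul, ← dist_eq_norm', hxy, norm_of_nonneg (by positivity), inv_mul_cancel₀ hd.ne']
  · rw [smul_inv_smul₀ hd.ne']
  · rw [real_inner_smul_left]
    exact mul_nonneg (by positivity) (inner_sub_nonneg_of_dist_le_dist (hle hy hz))
  · rw [← smul_neg, neg_sub, real_inner_smul_left]
    exact mul_nonneg (by positivity)
      (inner_sub_nonneg_of_dist_le_dist ((hle hx hz).trans_eq (dist_comm x y)))

end Diameter

namespace IsRadialProfile

variable {n : ℕ} {p r : ℝ} {Q : ℝ≥0∞} {F : ℝ → ℝ} {E : Type*} [NormedAddCommGroup E]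
  [InnerProductSpace ℝ E] {e x₀ x₁ : E}

theorem exists_lipschitzWith_comp_tiltedNorm (hF : IsRadialProfile n p Q r F) (he : ‖e‖ = 1)
    (x₀ : E) : ∃ K, LipschitzWith K fun x ↦ F (tiltedNorm e (x - x₀)) := by
  obtain ⟨K, hK⟩ := hF.exists_lipschitzWith
  exact ⟨_, hK.comp ((tiltedNorm.lipschitzWith he).comp
    (IsometryEquiv.subRight x₀).isometry.lipschitz)⟩

theorem exists_comp_tiltedNorm_ne_zero (hF : IsRadialProfile n p Q r F) (he : ‖e‖ = 1) {Ω : Set E}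
    (hx₀ : x₀ ∈ closure Ω) : ∃ x ∈ Ω, F (tiltedNorm e (x - x₀)) ≠ 0 := by
  obtain ⟨K, hK⟩ := hF.exists_lipschitzWith_comp_tiltedNorm he x₀
  have hx₀F : F (tiltedNorm e (x₀ - x₀)) ≠ 0 := by simpa [tiltedNorm] using hF.pos_zero.ne'
  obtain ⟨x, hx, hxΩ⟩ := mem_closure_iff.1 hx₀ _ hK.continuous.isOpen_support hx₀F
  exact ⟨x, hxΩ, hx⟩

theorem tsupport_comp_tiltedNorm_subset (hF : IsRadialProfile n p Q r F) (he : ‖e‖ = 1) (x₀ : E) :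
    tsupport (fun x ↦ F (tiltedNorm e (x - x₀))) ⊆ {x | tiltedNorm e (x - x₀) < r} := by
  obtain ⟨s, hs, hFs⟩ := hF.exists_eq_zero
  have hclosed : IsClosed {x | tiltedNorm e (x - x₀) ≤ s} :=
    isClosed_le ((tiltedNorm.lipschitzWith he).continuous.comp (by fun_prop)) continuous_const
  have hsub : tsupport (fun x ↦ F (tiltedNorm e (x - x₀))) ⊆ {x | tiltedNorm e (x - x₀) ≤ s} :=
    closure_minimal (fun x hx ↦ not_lt.1 fun h ↦ hx (hFs _ h.le)) hclosed
  exact fun x hx ↦ (hsub hx).trans_lt hs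

theorem disjoint_tsupport_comp_tiltedNorm (hF : IsRadialProfile n p Q r F) (he : ‖e‖ = 1)
    (h : x₁ - x₀ = (2 * r) • e) :
    Disjoint (tsupport fun x ↦ F (tiltedNorm e (x - x₀)))
      (tsupport fun x ↦ F (tiltedNorm (-e) (x - x₁))) := by
  have he' : ‖-e‖ = 1 := by rwa [norm_neg]
  refine (disjoint_left.2 fun x hx₀ hx₁ ↦ ?_).mono (hF.tsupport_comp_tiltedNorm_subset he x₀)
    (hF.tsupport_comp_tiltedNorm_subset he' x₁)
  have hinner : ⟪e, x - x₀⟫_ℝ + ⟪-e, x - x₁⟫_ℝ = 2 * r := by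
    rw [inner_neg_left, ← sub_eq_add_neg, ← inner_sub_right, sub_sub_sub_cancel_left, h,
      inner_smul_right, real_inner_self_eq_norm_sq, he, one_pow, mul_one]
  linarith [hx₀.out, hx₁.out, tiltedNorm.inner_le he (x - x₀), tiltedNorm.inner_le he' (x - x₁)]

end IsRadialProfile

section NeumannBound

variable {N : ℕ} {p : ℝ} {Ω : Set (EuclideanSpace ℝ (Fin N))}

theorem exists_lt_one_forall_muPQ_self_le (hN : 2 ≤ N) (hp : 1 < p) (hΩo : IsOpen Ω)
    (hΩb : Bornology.IsBounded Ω) (hΩc : Convex ℝ Ω) (hΩn : Ω.Nontrivial) :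
    ∃ c < (1 : ℝ), ∀ q, 0 ≤ q → ∀ F, IsRadialProfile (N - 1) p (ENNReal.ofReal q) (diam Ω / 2) F →
      muPQ p p Ω ≤ c * q := by
  have hp0 : 0 < p := one_pos.trans hp
  have hE : 1 < Module.finrank ℝ (EuclideanSpace ℝ (Fin N)) := by simpa
  have := Module.nontrivial_of_finrank_pos (one_pos.trans hE)
  obtain ⟨e, he, x₀, hx₀, x₁, hx₁, hdiam, h₀, h₁⟩ := exists_unit_vector_along_diam hΩb hΩn
  have he' : ‖-e‖ = 1 := by rwa [norm_neg]
  obtain ⟨c₀, hc₀, hle₀⟩ := exists_lt_one_forall_setLIntegral_fderiv_le volume hE hp0 he hΩo hΩb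
    hΩc hx₀ h₀
  obtain ⟨c₁, hc₁, hle₁⟩ := exists_lt_one_forall_setLIntegral_fderiv_le volume hE hp0 he' hΩo hΩb
    hΩc hx₁ h₁
  have hc : max c₀ c₁ < 1 := max_lt hc₀ hc₁
  refine ⟨(max c₀ c₁).toReal, ENNReal.toReal_lt_of_lt_ofReal (by simpa using hc),
    fun q hq F hF ↦ ?_⟩
  rw [finrank_euclideanSpace_fin] at hle₀ hle₁
  obtain ⟨K, hK⟩ := hF.exists_lipschitzWith_comp_tiltedNorm he x₀
  obtain ⟨L, hL⟩ := hF.exists_lipschitzWith_comp_tiltedNorm he' x₁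
  refine muPQ_self_le_of_disjoint_tsupport hp (by positivity) hΩo hΩb hK hL
    (fun _ ↦ hF.nonneg _) (fun _ ↦ hF.nonneg _) (hF.exists_comp_tiltedNorm_ne_zero he hx₀)
    (hF.exists_comp_tiltedNorm_ne_zero he' hx₁)
    (hF.disjoint_tsupport_comp_tiltedNorm he (by rw [hdiam, mul_div_cancel₀ _ two_ne_zero])) ?_ ?_
  all_goals rw [ENNReal.ofReal_mul ENNReal.toReal_nonneg,
    ENNReal.ofReal_toReal (hc.trans ENNReal.one_lt_top).ne, mul_assoc]
  · exact (hle₀ _ ENNReal.ofReal_ne_top _ _ hF).trans (by gcongr; exact le_max_left _ _)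
  · exact (hle₁ _ ENNReal.ofReal_ne_top _ _ hF).trans (by gcongr; exact le_max_right _ _)

end NeumannBound

/-- Theorem 3.1, inequality (3.1). For every open bounded convex set
`Ω ⊂ ℝ^N` and every open ball `B ⊂ ℝ^N`,
`μ_p(Ω) < λ_p(B) · (diam B / diam Ω)^p`. -/
theorem muP_lt_lambdaP_ball_diam {N : ℕ} (hN : 2 ≤ N) (p : ℝ) (hp : 1 < p)
    (Ω : Set (EuclideanSpace ℝ (Fin N))) (hΩo : IsOpen Ω)
    (hΩb : Bornology.IsBounded Ω) (hΩc : Convex ℝ Ω) (hΩne : Ω.Nonempty)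
    (c : EuclideanSpace ℝ (Fin N)) (r : ℝ) (hr : 0 < r) :
    muPQ p p Ω < lambdaPQ p p (ball c r) * (diam (ball c r) / diam Ω) ^ p := by
  have : Nontrivial (EuclideanSpace ℝ (Fin N)) :=
    Module.nontrivial_of_finrank_pos (R := ℝ) (by simp; omega)
  have hΩn : Ω.Nontrivial :=
    (infinite_of_mem_nhds _ (hΩo.mem_nhds hΩne.some_mem)).nontrivial
  have hd : 0 < diam Ω := diam_pos hΩn hΩb
  have hlambda : 0 < lambdaPQ p p (ball c r) := lambdaPQ_self_ball_pos hp.le hr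
  obtain ⟨C, hC, hmu⟩ := exists_lt_one_forall_muPQ_self_le hN hp hΩo hΩb hΩc hΩn
  have hk : 0 < (diam (ball c r) / diam Ω) ^ p := by
    rw [diam_ball_eq c hr.le]
    positivity
  have hcont : Continuous fun q ↦ C * ((diam (ball c r) / diam Ω) ^ p * q) := by fun_prop
  have hlt : C * ((diam (ball c r) / diam Ω) ^ p * lambdaPQ p p (ball c r)) <
      lambdaPQ p p (ball c r) * (diam (ball c r) / diam Ω) ^ p := by
    rw [mul_comm (lambdaPQ _ _ _)]
    exact mul_lt_of_lt_one_left (by positivity) hC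
  obtain ⟨q, hq, hqlt⟩ := ((hcont.tendsto _).eventually_lt_const hlt).exists_gt
  obtain ⟨F, hF⟩ := exists_isRadialProfile_of_lambdaPQ_lt (one_pos.trans hp) hr (half_pos hd) hq
  rw [div_div_eq_mul_div, mul_comm r, ← diam_ball_eq c hr.le] at hF
  exact (hmu _ (mul_nonneg hk.le (hlambda.trans hq).le) F hF).trans_lt hqlt
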